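/- Let Ω, ω and the eigenfunction u with eigenvalue λ be as in the context, and let μ be the smallest positive Neumann eigenvalue of the one-dimensional problem −(ω(x)φ'(x))' = μ ω(x) φ(x) on (0,1), characterized variationally as μ = inf{∫₀¹ ω (g')² dx / ∫₀¹ ω g² dx : g Lipschitz on [0,1], g ≠ 0, ∫₀¹ ω g dx = 0}. Then λ ≤ μ ≤ λ + Cε for a constant C depending only on n. -/

import Mathlib

open MeasureTheory Set Filter Topology RealInnerProductSpace

noncomputable section

/-- The point `(x, y) ∈ ℝ × ℝ^m ≅ ℝ^{m+1}`. -/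
def mkPt (m : ℕ) (x : ℝ) (y : EuclideanSpace ℝ (Fin m)) : EuclideanSpace ℝ (Fin (m+1)) :=
  (EuclideanSpace.equiv (Fin (m+1)) ℝ).symm (Fin.cons x ((EuclideanSpace.equiv (Fin m) ℝ) y))

/-- The cross-section `Ω(s) = {y : (s, y) ∈ Ω}`. -/
def cross {m : ℕ} (Ω : Set (EuclideanSpace ℝ (Fin (m+1)))) (s : ℝ) :
    Set (EuclideanSpace ℝ (Fin m)) := {y | mkPt m s y ∈ Ω}

/-- `ω(s)`: the (n-1)-dimensional volume of the cross-section `Ω(s)`. -/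
def ωvol {m : ℕ} (Ω : Set (EuclideanSpace ℝ (Fin (m+1)))) (s : ℝ) : ℝ :=
  (volume (cross Ω s)).toReal

/-- The Laplacian, as the sum of the pure second derivatives along the standard basis. -/
def lap {k : ℕ} (u : EuclideanSpace ℝ (Fin k) → ℝ) (p : EuclideanSpace ℝ (Fin k)) : ℝ :=
  ∑ i, fderiv ℝ (fun q => fderiv ℝ u q (EuclideanSpace.single i 1)) p (EuclideanSpace.single i 1)

/-- The cross-sectional average `ū(x)` of `u`. -/
def ubarFn {m : ℕ} (Ω : Set (EuclideanSpace ℝ (Fin (m+1))))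
    (u : EuclideanSpace ℝ (Fin (m+1)) → ℝ) (x : ℝ) : ℝ :=
  (∫ y in cross Ω x, u (mkPt m x y)) / ωvol Ω x


lemma mkPt_zero (m : ℕ) (x : ℝ) (y : EuclideanSpace ℝ (Fin m)) : (mkPt m x y) 0 = x := by
  simp [mkPt]

lemma mkPt_succ (m : ℕ) (x : ℝ) (y : EuclideanSpace ℝ (Fin m)) (i : Fin m) :
    (mkPt m x y) i.succ = y i := by
  simp [mkPt]

/-- the `y` component -/
def yPt {m : ℕ} (p : EuclideanSpace ℝ (Fin (m+1))) : EuclideanSpace ℝ (Fin m) :=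
  (EuclideanSpace.equiv (Fin m) ℝ).symm (fun i => p i.succ)

lemma mkPt_yPt {m : ℕ} (p : EuclideanSpace ℝ (Fin (m+1))) : mkPt m (p 0) (yPt p) = p := by
  ext i
  refine Fin.cases ?_ (fun j => ?_) i
  · rw [mkPt_zero]
  · rw [mkPt_succ]; simp [yPt]

lemma yPt_mkPt {m : ℕ} (x : ℝ) (y : EuclideanSpace ℝ (Fin m)) : yPt (mkPt m x y) = y := by
  ext i; simp [yPt, mkPt_succ]

lemma mkPt_combo {m : ℕ} (a b x x' : ℝ) (y y' : EuclideanSpace ℝ (Fin m)) :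
    a • mkPt m x y + b • mkPt m x' y' = mkPt m (a * x + b * x') (a • y + b • y') := by
  ext i
  refine Fin.cases ?_ (fun j => ?_) i
  · simp [mkPt_zero]
  · simp [mkPt_succ]

lemma mkPt_sub {m : ℕ} (x x' : ℝ) (y y' : EuclideanSpace ℝ (Fin m)) :
    mkPt m x y - mkPt m x' y' = mkPt m (x - x') (y - y') := by
  ext i
  refine Fin.cases ?_ (fun j => ?_) i
  · simp [mkPt_zero]
  · simp [mkPt_succ]

lemma norm_mkPt_sq {m : ℕ} (x : ℝ) (y : EuclideanSpace ℝ (Fin m)) :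
    ‖mkPt m x y‖ ^ 2 = x ^ 2 + ‖y‖ ^ 2 := by
  rw [EuclideanSpace.norm_sq_eq, EuclideanSpace.norm_sq_eq, Fin.sum_univ_succ]
  simp [mkPt_zero, mkPt_succ]

lemma continuous_mkPt (m : ℕ) :
    Continuous (fun z : ℝ × EuclideanSpace ℝ (Fin m) => mkPt m z.1 z.2) := by
  unfold mkPt
  refine (ContinuousLinearEquiv.continuous _).comp ?_
  refine continuous_pi (fun i => ?_)
  refine Fin.cases ?_ (fun j => ?_) i
  · simpa using continuous_fst
  · simp only [Fin.cons_succ]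
    exact (continuous_apply j).comp ((ContinuousLinearEquiv.continuous _).comp continuous_snd)

lemma continuous_yPt (m : ℕ) :
    Continuous (fun p : EuclideanSpace ℝ (Fin (m+1)) => yPt p) := by
  unfold yPt
  refine (ContinuousLinearEquiv.continuous _).comp ?_
  fun_prop

/-- homeomorphism -/
def mkHomeo (m : ℕ) : (ℝ × EuclideanSpace ℝ (Fin m)) ≃ₜ EuclideanSpace ℝ (Fin (m+1)) where
  toFun z := mkPt m z.1 z.2
  invFun p := (p 0, yPt p)
  left_inv z := by simp [mkPt_zero, yPt_mkPt]
  right_inv p := mkPt_yPt p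
  continuous_toFun := continuous_mkPt m
  continuous_invFun := by
    refine Continuous.prodMk (by fun_prop) (continuous_yPt m)

lemma mp_mkPt (m : ℕ) :
    MeasurePreserving (fun z : ℝ × EuclideanSpace ℝ (Fin m) => mkPt m z.1 z.2)
      (volume.prod volume) volume := by
  have h1 := (volume_preserving_piFinSuccAbove (fun _ : Fin (m+1) => ℝ) 0).symm
  have h2 := (PiLp.volume_preserving_toLp (Fin (m+1)))
  have h3 := (MeasurePreserving.id (volume : Measure ℝ)).prod
    (PiLp.volume_preserving_ofLp (Fin m))
  have h4 := h2.comp (h1.comp h3)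
  have h5 : (fun z : ℝ × EuclideanSpace ℝ (Fin m) => mkPt m z.1 z.2) =
      WithLp.toLp 2 ∘ ⇑(MeasurableEquiv.piFinSuccAbove (fun _ : Fin (m+1) => ℝ) 0).symm ∘
        Prod.map id WithLp.ofLp := by
    ext z i
    refine Fin.cases ?_ (fun j => ?_) i
    · simp [mkPt_zero, MeasurableEquiv.piFinSuccAbove]
    · simp [mkPt_succ, MeasurableEquiv.piFinSuccAbove]
  rw [h5]
  exact h4

lemma me_mkPt (m : ℕ) :
    MeasurableEmbedding (fun z : ℝ × EuclideanSpace ℝ (Fin m) => mkPt m z.1 z.2) :=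
  (mkHomeo m).measurableEmbedding

lemma continuous_mkPt_right (m : ℕ) (x : ℝ) : Continuous (fun y => mkPt m x y) :=
  (continuous_mkPt m).comp (by fun_prop : Continuous fun y => (x, y))

lemma isOpen_cross {m : ℕ} {Ω : Set (EuclideanSpace ℝ (Fin (m+1)))} (h : IsOpen Ω) (s : ℝ) :
    IsOpen (cross Ω s) := h.preimage (continuous_mkPt_right m s)

lemma meas_cross {m : ℕ} {Ω : Set (EuclideanSpace ℝ (Fin (m+1)))} (h : MeasurableSet Ω) (s : ℝ) :
    MeasurableSet (cross Ω s) := h.preimage (continuous_mkPt_right m s).measurable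

/-- Fubini -/
lemma fubini {m : ℕ} {Ω : Set (EuclideanSpace ℝ (Fin (m+1)))} (hΩ : MeasurableSet Ω)
    {f : EuclideanSpace ℝ (Fin (m+1)) → ℝ} (hf : IntegrableOn f Ω) :
    ∫ p in Ω, f p = ∫ x, ∫ y in cross Ω x, f (mkPt m x y) := by
  rw [← integral_indicator hΩ, ← (mp_mkPt m).integral_comp (me_mkPt m)]
  have hi : Integrable (fun z : ℝ × EuclideanSpace ℝ (Fin m) =>
      Ω.indicator f (mkPt m z.1 z.2)) (volume.prod volume) :=
    ((mp_mkPt m).integrable_comp_emb (me_mkPt m)).2 ((integrable_indicator_iff hΩ).2 hf)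
  rw [integral_prod _ hi]
  congr 1; ext x
  rw [← integral_indicator (meas_cross hΩ x)]
  rfl

lemma fubini_int {m : ℕ} {Ω : Set (EuclideanSpace ℝ (Fin (m+1)))} (hΩ : MeasurableSet Ω)
    {f : EuclideanSpace ℝ (Fin (m+1)) → ℝ} (hf : IntegrableOn f Ω) :
    Integrable (fun x => ∫ y in cross Ω x, f (mkPt m x y)) := by
  have hi : Integrable (fun z : ℝ × EuclideanSpace ℝ (Fin m) =>
      Ω.indicator f (mkPt m z.1 z.2)) (volume.prod volume) :=
    ((mp_mkPt m).integrable_comp_emb (me_mkPt m)).2 ((integrable_indicator_iff hΩ).2 hf)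
  convert hi.integral_prod_left using 1
  ext x
  rw [← integral_indicator (meas_cross hΩ x)]
  rfl

lemma fubini_meas {m : ℕ} {Ω : Set (EuclideanSpace ℝ (Fin (m+1)))} (hΩ : MeasurableSet Ω)
    {f : EuclideanSpace ℝ (Fin (m+1)) → ℝ} (hf : Measurable f) :
    Measurable (fun x => ∫ y in cross Ω x, f (mkPt m x y)) := by
  have hi : StronglyMeasurable (fun z : ℝ × EuclideanSpace ℝ (Fin m) =>
      Ω.indicator f (mkPt m z.1 z.2)) :=
    ((hf.indicator hΩ).comp (me_mkPt m).measurable).stronglyMeasurable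
  convert (hi.integral_prod_right' (ν := volume)).measurable using 1
  ext x
  rw [← integral_indicator (meas_cross hΩ x)]
  rfl

lemma meas_ωvol {m : ℕ} {Ω : Set (EuclideanSpace ℝ (Fin (m+1)))} (hΩ : MeasurableSet Ω) :
    Measurable (ωvol Ω) := by
  convert fubini_meas (f := fun _ => 1) hΩ measurable_const using 1
  ext x; simp [ωvol, Measure.real]

/-- Fubini for functions of `x` only, domain in `(0,1)`. -/
lemma fubini_x {m : ℕ} {Ω : Set (EuclideanSpace ℝ (Fin (m+1)))} (hΩ : MeasurableSet Ω)
    (h01 : ∀ p ∈ Ω, p 0 ∈ Ioo (0:ℝ) 1)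
    {φ : ℝ → ℝ} (hf : IntegrableOn (fun p : EuclideanSpace ℝ (Fin (m+1)) => φ (p 0)) Ω) :
    ∫ p in Ω, φ (p 0) = ∫ x in (0:ℝ)..1, ωvol Ω x * φ x := by
  rw [fubini hΩ hf, intervalIntegral.integral_of_le zero_le_one, integral_Ioc_eq_integral_Ioo,
    ← integral_indicator measurableSet_Ioo]
  congr 1; ext x
  simp only [mkPt_zero]
  by_cases hx : x ∈ Ioo (0:ℝ) 1
  · simp [hx, ωvol, Measure.real]
  · have : cross Ω x = ∅ := by
      ext y; simp only [cross, mem_ofPred_eq, mem_empty_iff_false, iff_false]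
      intro h; have := h01 _ h; rw [mkPt_zero] at this; exact hx this
    simp [hx, this]


lemma deriv_bd {g : ℝ → ℝ} {K : NNReal} (hg : LipschitzOnWith K g (Icc 0 1)) :
    ∀ x ∈ Ioo (0:ℝ) 1, |deriv g x| ≤ K := fun x hx => by
  simpa using norm_deriv_le_of_lipschitzOn (Icc_mem_nhds hx.1 hx.2) hg

lemma approx_lip {g : ℝ → ℝ} {K : NNReal} (hg : LipschitzOnWith K g (Icc 0 1)) {η : ℝ}
    (hη : 0 < η) (hη1 : η ≤ 1) :
    ∃ P : ℝ → ℝ, ContDiff ℝ (⊤:ℕ∞) P ∧ (∀ x ∈ Icc (0:ℝ) 1, |P x - g x| ≤ 2 * η) ∧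
      (∀ x ∈ Icc (0:ℝ) 1, |deriv P x| ≤ K + 1) ∧
      ∫ x in Ioo (0:ℝ) 1, |deriv P x - deriv g x| ≤ 2 * η := by
  have hint : Integrable (deriv g) (volume.restrict (Ioo (0:ℝ) 1)) := by
    refine Integrable.of_bound (measurable_deriv g).aestronglyMeasurable K ?_
    refine (ae_restrict_iff' measurableSet_Ioo).2 (Eventually.of_forall fun x hx => ?_)
    simpa using deriv_bd hg x hx
  obtain ⟨h, hh, hhi⟩ := hint.exists_boundedContinuous_integral_sub_le hη
  let k : ℝ → ℝ := fun x => max (-K) (min (h x) K)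
  have hk : Continuous k := by
    have := h.continuous
    fun_prop
  obtain ⟨q, hq⟩ := exists_polynomial_near_of_continuousOn 0 1 k hk.continuousOn η hη
  let P : ℝ → ℝ := fun x => g 0 + ∫ t in (0:ℝ)..x, q.eval t
  have hqc : Continuous fun t => q.eval t := q.continuous
  have hP : ∀ x, HasDerivAt P (q.eval x) x := fun x => by
    exact (intervalIntegral.integral_hasDerivAt_right (hqc.intervalIntegrable _ _)
      hqc.stronglyMeasurable.stronglyMeasurableAtFilter hqc.continuousAt).const_add (g 0)
  have hdP : deriv P = fun x => q.eval x := funext fun x => (hP x).deriv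
  have hkK : ∀ x, |k x| ≤ K := fun x => by
    rw [abs_le]; constructor
    · exact le_max_left _ _
    · exact max_le (by have := K.coe_nonneg; linarith) (min_le_right _ _)
  have hclose : ∀ x ∈ Ioo (0:ℝ) 1, |q.eval x - deriv g x| ≤ η + |deriv g x - h x| := by
    intro x hx
    have h1 := hq x (Ioo_subset_Icc_self hx)
    have h2 := abs_le.1 (deriv_bd hg x hx)
    have h3 : |k x - deriv g x| ≤ |deriv g x - h x| := by
      have hh1 := le_abs_self (deriv g x - h x)
      have hh2 := neg_abs_le (deriv g x - h x)
      have hh3 := abs_nonneg (deriv g x - h x)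
      simp only [k, abs_le]
      constructor
      · rcases le_total (h x) K with h4 | h4
        · rw [min_eq_left h4]; have := le_max_right (-(K:ℝ)) (h x); linarith
        · rw [min_eq_right h4]; have := le_max_right (-(K:ℝ)) (K); linarith
      · have := max_le (show -(K:ℝ) ≤ deriv g x + |deriv g x - h x| by linarith)
          ((min_le_left (h x) K).trans (show h x ≤ deriv g x + |deriv g x - h x| by linarith))
        linarith
    calc |q.eval x - deriv g x| ≤ |q.eval x - k x| + |k x - deriv g x| := abs_sub_le _ _ _
      _ ≤ _ := by linarith
  have hqi : Integrable (fun x => q.eval x) (volume.restrict (Ioo (0:ℝ) 1)) :=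
    (hqc.continuousOn.integrableOn_compact isCompact_Icc).mono_set Ioo_subset_Icc_self
  have hI : ∫ x in Ioo (0:ℝ) 1, |q.eval x - deriv g x| ≤ 2 * η := by
    calc ∫ x in Ioo (0:ℝ) 1, |q.eval x - deriv g x|
        ≤ ∫ x in Ioo (0:ℝ) 1, (η + |deriv g x - h x|) := by
          refine setIntegral_mono_on (hqi.sub hint).abs
            ((integrable_const _).add (hint.sub hhi).abs) measurableSet_Ioo hclose
      _ = η + ∫ x in Ioo (0:ℝ) 1, |deriv g x - h x| := by
          have := integral_add (μ := volume.restrict (Ioo (0:ℝ) 1)) (integrable_const η)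
            (hint.sub hhi).abs
          simp only [Pi.sub_apply] at this
          rw [this]; simp
      _ ≤ 2 * η := by
          have : ∫ x in Ioo (0:ℝ) 1, |deriv g x - h x| ≤ η := by simpa using hh
          linarith
  refine ⟨P, ?_, ?_, ?_, ?_⟩
  · rw [contDiff_infty_iff_deriv]
    refine ⟨fun x => (hP x).differentiableAt, ?_⟩
    rw [hdP]; simpa using q.contDiff_aeval (𝕜 := ℝ) (⊤:ℕ∞)
  · intro x hx
    have hac : ∫ t in (0:ℝ)..x, deriv g t = g x - g 0 := by
      apply AbsolutelyContinuousOnInterval.integral_deriv_eq_sub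
      apply LipschitzOnWith.absolutelyContinuousOnInterval (K := K)
      rw [uIcc_of_le hx.1]
      exact hg.mono (Icc_subset_Icc_right hx.2)
    have hgi : IntervalIntegrable (deriv g) volume 0 x := by
      rw [intervalIntegrable_iff_integrableOn_Ioo_of_le hx.1]
      exact IntegrableOn.mono_set hint (Ioo_subset_Ioo_right hx.2)
    have : P x - g x = ∫ t in (0:ℝ)..x, (q.eval t - deriv g t) := by
      rw [intervalIntegral.integral_sub (hqc.intervalIntegrable _ _) hgi, hac]
      simp only [P]; ring
    rw [this]
    calc |∫ t in (0:ℝ)..x, (q.eval t - deriv g t)|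
        ≤ ∫ t in (0:ℝ)..x, |q.eval t - deriv g t| :=
          intervalIntegral.abs_integral_le_integral_abs hx.1
      _ = ∫ t in Ioo (0:ℝ) x, |q.eval t - deriv g t| := by
          rw [intervalIntegral.integral_of_le hx.1, integral_Ioc_eq_integral_Ioo]
      _ ≤ ∫ t in Ioo (0:ℝ) 1, |q.eval t - deriv g t| := by
          refine setIntegral_mono_set (hqi.sub hint).abs
            (Eventually.of_forall fun _ => abs_nonneg _)
            (Ioo_subset_Ioo_right hx.2).eventuallyLE
      _ ≤ _ := hI
  · intro x hx
    rw [hdP]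
    have h1 := hq x hx
    have h2 := hkK x
    rw [abs_le] at h2 ⊢
    rw [abs_lt] at h1
    constructor <;> linarith
  · rw [hdP]; exact hI

lemma gradient_comp_coord {m : ℕ} {P : ℝ → ℝ} (hP : Differentiable ℝ P)
    (p : EuclideanSpace ℝ (Fin (m+1))) :
    ‖gradient (fun q : EuclideanSpace ℝ (Fin (m+1)) => P (q 0)) p‖ ^ 2 = (deriv P (p 0)) ^ 2 := by
  have h1 : HasGradientAt (fun q : EuclideanSpace ℝ (Fin (m+1)) => P (q 0))
      (deriv P (p 0) • EuclideanSpace.single 0 (1:ℝ)) p := by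
    rw [hasGradientAt_iff_hasFDerivAt]
    have h2 : HasFDerivAt (fun q : EuclideanSpace ℝ (Fin (m+1)) => q 0)
        (EuclideanSpace.proj 0 : EuclideanSpace ℝ (Fin (m+1)) →L[ℝ] ℝ) p :=
      (EuclideanSpace.proj 0 : EuclideanSpace ℝ (Fin (m+1)) →L[ℝ] ℝ).hasFDerivAt
    have h3 := (hP (p 0)).hasDerivAt.comp_hasFDerivAt p h2
    have h4 : InnerProductSpace.toDual ℝ (EuclideanSpace ℝ (Fin (m+1)))
        (deriv P (p 0) • EuclideanSpace.single 0 (1:ℝ)) = deriv P (p 0) •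
        (EuclideanSpace.proj 0 : EuclideanSpace ℝ (Fin (m+1)) →L[ℝ] ℝ) := by
      ext v
      have h5 : ⟪(EuclideanSpace.single 0 (1:ℝ) : EuclideanSpace ℝ (Fin (m+1))), v⟫ = v 0 := by
        rw [EuclideanSpace.inner_single_left]; simp
      simp [h5]
    rw [h4]
    exact h3
  rw [h1.gradient, norm_smul]
  simp

/-- integrability on finite measure sets -/
lemma intOn_of_bdd {E : Type*} [MeasurableSpace E] {ν : Measure E} {Ω : Set E}
    (hΩ : MeasurableSet Ω)
    (hfin : ν Ω ≠ ⊤) {f : E → ℝ} (hf : AEStronglyMeasurable f (ν.restrict Ω)) (C : ℝ)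
    (h : ∀ p ∈ Ω, |f p| ≤ C) : IntegrableOn f Ω ν := by
  have : IsFiniteMeasure (ν.restrict Ω) := ⟨by simpa using hfin.lt_top⟩
  refine Integrable.of_bound hf C ?_
  exact (ae_restrict_iff' hΩ).2 (Eventually.of_forall fun x hx => h x hx)

lemma lower_bound {m : ℕ} {Ω : Set (EuclideanSpace ℝ (Fin (m+1)))} (hΩ : MeasurableSet Ω)
    (hfin : volume Ω ≠ ⊤)
    (h01 : ∀ p ∈ Ω, p 0 ∈ Ioo (0:ℝ) 1)
    {W lam : ℝ} (hlam : 0 ≤ lam) (hW : ∀ x, ωvol Ω x ≤ W)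
    (hR : ∀ w : EuclideanSpace ℝ (Fin (m+1)) → ℝ, ContDiff ℝ (⊤:ℕ∞) w → ∫ p in Ω, w p = 0 →
      lam * ∫ p in Ω, (w p) ^ 2 ≤ ∫ p in Ω, ‖gradient w p‖ ^ 2)
    {g : ℝ → ℝ} {K : NNReal} (hg : LipschitzOnWith K g (Icc 0 1))
    (hg0 : ∫ x in (0:ℝ)..1, ωvol Ω x * g x = 0) :
    lam * ∫ x in (0:ℝ)..1, ωvol Ω x * (g x) ^ 2 ≤
      ∫ x in (0:ℝ)..1, ωvol Ω x * (deriv g x) ^ 2 := by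
  have hgc := hg.continuousOn
  obtain ⟨G, hG⟩ := isCompact_Icc.exists_bound_of_continuousOn hgc
  simp only [Real.norm_eq_abs] at hG
  have hG0 : 0 ≤ G := (abs_nonneg _).trans (hG 0 (by simp))
  have hmc : Continuous fun p : EuclideanSpace ℝ (Fin (m+1)) => p 0 := by fun_prop
  have hmaps : MapsTo (fun p : EuclideanSpace ℝ (Fin (m+1)) => p 0) Ω (Icc 0 1) :=
    fun p hp => Ioo_subset_Icc_self (h01 p hp)
  have hgm : AEStronglyMeasurable (fun p : EuclideanSpace ℝ (Fin (m+1)) => g (p 0))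
      (volume.restrict Ω) :=
    (hgc.comp hmc.continuousOn hmaps).aestronglyMeasurable hΩ
  have hgm' : AEStronglyMeasurable (fun p : EuclideanSpace ℝ (Fin (m+1)) => deriv g (p 0))
      (volume.restrict Ω) :=
    ((measurable_deriv g).comp hmc.measurable).aestronglyMeasurable
  have hgi : IntegrableOn (fun p : EuclideanSpace ℝ (Fin (m+1)) => g (p 0)) Ω :=
    intOn_of_bdd hΩ hfin hgm G fun p hp => hG _ (hmaps hp)
  have hg2i : IntegrableOn (fun p : EuclideanSpace ℝ (Fin (m+1)) => g (p 0) ^ 2) Ω :=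
    intOn_of_bdd hΩ hfin (hgm.pow 2) (G ^ 2) fun p hp => by
      rw [abs_pow]; exact pow_le_pow_left₀ (abs_nonneg _) (hG _ (hmaps hp)) 2
  have hd2i : IntegrableOn (fun p : EuclideanSpace ℝ (Fin (m+1)) => deriv g (p 0) ^ 2) Ω :=
    intOn_of_bdd hΩ hfin (hgm'.pow 2) (K ^ 2) fun p hp => by
      rw [abs_pow]; exact pow_le_pow_left₀ (abs_nonneg _) (deriv_bd hg _ (h01 p hp)) 2
  rw [← fubini_x hΩ h01 (φ := fun x => g x ^ 2) hg2i,
    ← fubini_x hΩ h01 (φ := fun x => deriv g x ^ 2) hd2i]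
  rw [← fubini_x hΩ h01 (φ := g) hgi] at hg0
  set V := volume.real Ω with hV
  have hV0 : 0 ≤ V := measureReal_nonneg
  have hW0 : 0 ≤ W := le_trans ENNReal.toReal_nonneg (hW 0)
  have key : ∀ η : ℝ, 0 < η → η ≤ 1 →
      lam * ∫ p in Ω, (g (p 0)) ^ 2 ≤ (∫ p in Ω, (deriv g (p 0)) ^ 2)
        + η * (lam * (8 * G * V) + (2 * K + 1) * W * 2) := by
    intro η hη hη1
    obtain ⟨P, hPs, hPg, hPK, hPI⟩ := approx_lip hg hη hη1
    have hPd : Differentiable ℝ P := hPs.differentiable (by simp)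
    have hPi : IntegrableOn (fun p : EuclideanSpace ℝ (Fin (m+1)) => P (p 0)) Ω :=
      intOn_of_bdd hΩ hfin ((hPs.continuous.comp hmc).aestronglyMeasurable) (G + 2 * η)
        fun p hp => by
          have h1 := abs_le.1 (hPg _ (hmaps hp))
          have h2 := abs_le.1 (hG _ (hmaps hp))
          rw [abs_le]; constructor <;> linarith
    set c := (∫ p in Ω, P (p 0)) / V with hc
    have hcV : c * V = ∫ p in Ω, P (p 0) := by
      by_cases hVz : V = 0
      · have : volume.restrict Ω = 0 := by
          rw [Measure.restrict_eq_zero]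
          exact (measureReal_eq_zero_iff hfin).1 hVz
        simp [hVz, this]
      · rw [hc]; field_simp
    have hcb : |c| ≤ 2 * η := by
      have : |∫ p in Ω, P (p 0)| ≤ 2 * η * V := by
        have h1 : ∫ p in Ω, P (p 0) = ∫ p in Ω, (P (p 0) - g (p 0)) := by
          rw [integral_sub hPi hgi, hg0, sub_zero]
        rw [h1]
        exact norm_setIntegral_le_of_norm_le_const (f := fun p => P (p 0) - g (p 0))
          hfin.lt_top (fun p hp => hPg _ (hmaps hp))
      rw [hc, abs_div, abs_of_nonneg hV0]
      exact div_le_of_le_mul₀ hV0 (by positivity) this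
    have hw := hR (fun p => P (p 0) - c) (by
      refine ContDiff.sub (hPs.comp ?_) contDiff_const
      exact contDiff_piLp_apply 2) (by
      rw [integral_sub hPi (integrableOn_const hfin)]
      rw [← hcV]; simp [hV]; ring)
    simp only [gradient_comp_coord (hPd.sub_const c)] at hw
    have hdd : deriv (fun x => P x - c) = deriv P := by
      ext x; simp
    rw [hdd] at hw
    have hP'c : Continuous (deriv P) := hPs.continuous_deriv (by simp)
    have e1 : (∫ p in Ω, (g (p 0)) ^ 2) - 8 * G * V * η ≤ ∫ p in Ω, (P (p 0) - c) ^ 2 := by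
      have : ∫ p in Ω, ((g (p 0)) ^ 2 - 8 * G * η) ≤ ∫ p in Ω, (P (p 0) - c) ^ 2 := by
        refine setIntegral_mono_on (hg2i.sub (integrableOn_const hfin)) ?_ hΩ fun p hp => ?_
        · refine intOn_of_bdd hΩ hfin (((hPs.continuous.comp hmc).sub
            continuous_const).pow 2).aestronglyMeasurable ((G + 4 * η) ^ 2) fun p hp => ?_
          have h1 := abs_le.1 (hPg _ (hmaps hp))
          have h2 := abs_le.1 (hG _ (hmaps hp))
          have h3 := abs_le.1 hcb
          rw [abs_pow]; refine pow_le_pow_left₀ (abs_nonneg _) ?_ 2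
          rw [abs_le]; constructor <;> simp <;> linarith
        · have h1 := abs_le.1 (hPg _ (hmaps hp))
          have h3 := abs_le.1 hcb
          have h4 : |P (p 0) - c - g (p 0)| ≤ 4 * η := by
            rw [abs_le]; constructor <;> linarith
          have h5 : |g (p 0) * (P (p 0) - c - g (p 0))| ≤ G * (4 * η) := by
            rw [abs_mul]; exact mul_le_mul (hG _ (hmaps hp)) h4 (abs_nonneg _) hG0
          have h6 := (abs_le.1 h5).1
          nlinarith [sq_nonneg (P (p 0) - c - g (p 0))]
      rw [integral_sub hg2i (integrableOn_const hfin)] at this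
      simp only [setIntegral_const, smul_eq_mul, ← hV] at this
      linarith
    have e2 : ∫ p in Ω, deriv P (p 0) ^ 2 ≤ (∫ p in Ω, (deriv g (p 0)) ^ 2)
        + (2 * K + 1) * (W * (2 * η)) := by
      have i1 : IntegrableOn (fun p : EuclideanSpace ℝ (Fin (m+1)) =>
          |deriv P (p 0) - deriv g (p 0)|) Ω := by
        refine intOn_of_bdd hΩ hfin (((hP'c.comp hmc).aestronglyMeasurable.sub hgm').norm)
          (2 * K + 1) fun p hp => ?_
        have h1 := abs_le.1 (hPK _ (hmaps hp))
        have h2 := abs_le.1 (deriv_bd hg _ (h01 p hp))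
        rw [abs_abs, abs_le]; constructor <;> linarith
      have i2 : ∫ p in Ω, |deriv P (p 0) - deriv g (p 0)| ≤ W * (2 * η) := by
        rw [fubini_x hΩ h01 (φ := fun x => |deriv P x - deriv g x|) i1,
          intervalIntegral.integral_of_le zero_le_one, integral_Ioc_eq_integral_Ioo]
        have i3 : IntegrableOn (fun x => |deriv P x - deriv g x|) (Ioo (0:ℝ) 1) := by
          refine intOn_of_bdd measurableSet_Ioo (by simp) ?_ (2 * K + 1) fun x hx => ?_
          · exact (hP'c.measurable.sub (measurable_deriv g)).norm.aestronglyMeasurable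
          · have h1 := abs_le.1 (hPK _ (Ioo_subset_Icc_self hx))
            have h2 := abs_le.1 (deriv_bd hg _ hx)
            rw [abs_abs, abs_le]; constructor <;> linarith
        calc _ ≤ ∫ x in Ioo (0:ℝ) 1, W * |deriv P x - deriv g x| := by
              refine integral_mono_of_nonneg
                (Eventually.of_forall fun x =>
                  mul_nonneg ENNReal.toReal_nonneg (abs_nonneg _)) (i3.const_mul W)
                (Eventually.of_forall fun x =>
                  mul_le_mul_of_nonneg_right (hW x) (abs_nonneg _))
          _ = W * ∫ x in Ioo (0:ℝ) 1, |deriv P x - deriv g x| := integral_const_mul _ _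
          _ ≤ _ := mul_le_mul_of_nonneg_left hPI hW0
      calc _ ≤ ∫ p in Ω, (deriv g (p 0) ^ 2 +
            (2 * K + 1) * |deriv P (p 0) - deriv g (p 0)|) := by
            refine setIntegral_mono_on ?_ (hd2i.add (i1.const_mul _)) hΩ fun p hp => ?_
            · refine intOn_of_bdd hΩ hfin ((hP'c.comp hmc).pow 2).aestronglyMeasurable
                ((K + 1) ^ 2) fun p hp => ?_
              rw [abs_pow]; exact pow_le_pow_left₀ (abs_nonneg _) (hPK _ (hmaps hp)) 2
            · have h1 := abs_le.1 (hPK _ (hmaps hp))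
              have h2 := abs_le.1 (deriv_bd hg _ (h01 p hp))
              have h3 : |deriv P (p 0) + deriv g (p 0)| ≤ 2 * K + 1 := by
                rw [abs_le]; constructor <;> linarith
              have h4 : |(deriv P (p 0) + deriv g (p 0)) * (deriv P (p 0) - deriv g (p 0))|
                ≤ (2 * K + 1) * |deriv P (p 0) - deriv g (p 0)| := by
                rw [abs_mul]; exact mul_le_mul_of_nonneg_right h3 (abs_nonneg _)
              have h5 := (abs_le.1 h4).2
              linarith
        _ = (∫ p in Ω, deriv g (p 0) ^ 2) +
            (2 * K + 1) * ∫ p in Ω, |deriv P (p 0) - deriv g (p 0)| := by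
            rw [integral_add hd2i (i1.const_mul _), integral_const_mul]
        _ ≤ _ := by
            have : (0:ℝ) ≤ 2 * K + 1 := by positivity
            nlinarith [mul_le_mul_of_nonneg_left i2 this]
    have e3 := mul_le_mul_of_nonneg_left e1 hlam
    linarith
  set B := lam * (8 * G * V) + (2 * K + 1) * W * 2 with hB
  have hB0 : 0 ≤ B := by positivity
  refine le_of_forall_pos_le_add fun δ hδ => ?_
  have h1 : 0 < min 1 (δ / (B + 1)) := by positivity
  have h2 := key _ h1 (min_le_left _ _)
  have h3 : min 1 (δ / (B + 1)) * B ≤ δ := by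
    calc _ ≤ δ / (B + 1) * B := mul_le_mul_of_nonneg_right (min_le_right _ _) hB0
      _ ≤ δ := by rw [div_mul_eq_mul_div, div_le_iff₀ (by positivity)]; nlinarith
  linarith


/-- bundled hypotheses -/
structure Setup (m : ℕ) (Ω : Set (EuclideanSpace ℝ (Fin (m+1)))) (ε : ℝ)
    (u : EuclideanSpace ℝ (Fin (m+1)) → ℝ) (B M : ℝ) (p q : EuclideanSpace ℝ (Fin (m+1))) :
    Prop where
  hε : 0 < ε
  hε4 : ε ≤ 1/4
  hopen : IsOpen Ω
  hconv : Convex ℝ Ω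
  hfin : volume Ω ≠ ⊤
  hsub : ∀ z ∈ Ω, z 0 ∈ Ioo (0:ℝ) 1 ∧ ‖yPt z‖ < ε
  hne : ∀ s ∈ Ioo (0:ℝ) 1, (cross Ω s).Nonempty
  hp : p ∈ closure Ω
  hp0 : p 0 = 0
  hpy : ‖yPt p‖ ≤ ε
  hq : q ∈ closure Ω
  hq0 : q 0 = 1
  hM0 : 0 ≤ M
  hB0 : 0 ≤ B
  hM : ∀ z ∈ Ω, |u z| ≤ M
  hd : ∀ z ∈ Ω, DifferentiableAt ℝ u z
  hc : ContinuousOn (gradient u) Ω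
  hg : ∀ z ∈ Ω, ‖gradient u z‖ ≤ B * max (min (z 0) (1 - z 0)) ε

/-- contraction towards `p` -/
def cT {d : ℕ} (p : EuclideanSpace ℝ (Fin d)) (σ : ℝ) (z : EuclideanSpace ℝ (Fin d)) :
    EuclideanSpace ℝ (Fin d) := (1 - σ) • p + σ • z

lemma jensen_sq {α : Type*} [MeasurableSpace α] {ν : Measure α} [IsFiniteMeasure ν] {f : α → ℝ}
    (hf : Integrable f ν) (hf2 : Integrable (fun x => f x ^ 2) ν) :
    (∫ x, f x ∂ν) ^ 2 ≤ ν.real univ * ∫ x, f x ^ 2 ∂ν := by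
  set V := ν.real univ with hV
  have hV0 : 0 ≤ V := measureReal_nonneg
  set I := ∫ x, f x ∂ν with hI
  have h : 0 ≤ ∫ x, (V * f x - I) ^ 2 ∂ν := integral_nonneg fun x => sq_nonneg _
  have h2 : ∫ x, (V * f x - I) ^ 2 ∂ν = V ^ 2 * (∫ x, f x ^ 2 ∂ν) - V * I ^ 2 := by
    have : ∀ x, (V * f x - I) ^ 2 = V ^ 2 * f x ^ 2 - (2 * V * I * f x - I ^ 2) := fun x => by ring
    simp_rw [this]
    have hi2 : Integrable (fun x => 2 * V * I * f x - I ^ 2) ν :=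
      (hf.const_mul _).sub (integrable_const _)
    rw [integral_sub (hf2.const_mul _) hi2,
      integral_sub (hf.const_mul _) (integrable_const _), integral_const_mul, integral_const_mul,
      integral_const, smul_eq_mul, ← hV, ← hI]
    ring
  rw [h2] at h
  rcases eq_or_lt_of_le hV0 with h0 | h0
  · have : ν = 0 := by
      have := (measureReal_eq_zero_iff (μ := ν) (s := univ)).1 (by rw [← hV]; exact h0.symm)
      exact Measure.measure_univ_eq_zero.1 this
    have hI0 : I = 0 := by rw [hI, this]; simp
    rw [hI0, ← h0]; simp
  · have h3 : 0 ≤ V * (V * (∫ x, f x ^ 2 ∂ν) - I ^ 2) := by nlinarith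
    have := nonneg_of_mul_nonneg_right h3 h0
    linarith

lemma int_comp_cT {d : ℕ} (F : EuclideanSpace ℝ (Fin d) → ℝ) (p : EuclideanSpace ℝ (Fin d))
    {σ : ℝ} (hσ : 0 < σ) : ∫ z, F (cT p σ z) = (σ ^ d)⁻¹ * ∫ z, F z := by
  have h1 := Measure.integral_comp_smul (volume : Measure (EuclideanSpace ℝ (Fin d)))
    (fun w => F ((1 - σ) • p + w)) σ
  simp only [cT]
  rw [h1, integral_add_left_eq_self (fun w => F w) ((1 - σ) • p)]
  rw [finrank_euclideanSpace_fin, abs_of_pos (by positivity), smul_eq_mul]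

lemma integrable_comp_cT {d : ℕ} {F : EuclideanSpace ℝ (Fin d) → ℝ} (hF : Integrable F)
    (p : EuclideanSpace ℝ (Fin d))
    {σ : ℝ} (hσ : 0 < σ) : Integrable (fun z => F (cT p σ z)) := by
  have h1 : Integrable (fun w => F ((1 - σ) • p + w)) := hF.comp_add_left _
  exact h1.comp_smul hσ.ne'

lemma cT_inj {d : ℕ} (p : EuclideanSpace ℝ (Fin d)) {σ : ℝ} (hσ : 0 < σ) :
    Function.Injective (cT p σ) := fun z w h => by
  simp only [cT, add_right_inj] at h
  exact smul_right_injective _ hσ.ne' h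

lemma vol_image_cT {d : ℕ} (p : EuclideanSpace ℝ (Fin d)) {σ : ℝ} (hσ : 0 < σ)
    (S : Set (EuclideanSpace ℝ (Fin d))) :
    volume.real (cT p σ '' S) = σ ^ d * volume.real S := by
  have h : cT p σ = AffineMap.homothety p σ := by
    ext1 z; simp only [cT, AffineMap.homothety_apply, vsub_eq_sub, vadd_eq_add]; module
  rw [h, Measure.real, Measure.addHaar_image_homothety, ENNReal.toReal_mul,
    finrank_euclideanSpace_fin, ENNReal.toReal_ofReal (abs_nonneg _), abs_of_pos (by positivity)]
  rfl

lemma avg_compare {E : Type*} [MeasurableSpace E] {ν : Measure E} {A S : Set E} {φ : E → ℝ}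
    {κ : ℝ} (hAS : A ⊆ S) (hA : MeasurableSet A) (hS : MeasurableSet S) (hSf : ν S ≠ ⊤)
    (hα : 0 < ν.real A) (hi : IntegrableOn φ S ν)
    (hφ : ∀ x ∈ S, |φ x| ≤ κ) :
    |(∫ x in A, φ x ∂ν) / ν.real A - (∫ x in S, φ x ∂ν) / ν.real S| ≤
      2 * κ * ((ν.real S - ν.real A) / ν.real S) := by
  set α := ν.real A
  set b := ν.real S
  have hab : α ≤ b := measureReal_mono hAS hSf
  have hb : 0 < b := hα.trans_le hab
  have hAf : ν A ≠ ⊤ := ne_top_of_le_ne_top hSf (measure_mono hAS)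
  have hdiff : ν.real (S \ A) = b - α := measureReal_sdiff hAS hA hSf
  have hsplit : ∫ x in S \ A, φ x ∂ν = (∫ x in S, φ x ∂ν) - ∫ x in A, φ x ∂ν :=
    setIntegral_sdiff hA hi hAS
  have h1 : |∫ x in A, φ x ∂ν| ≤ κ * α :=
    norm_setIntegral_le_of_norm_le_const (f := φ) hAf.lt_top fun x hx => hφ x (hAS hx)
  have h2 : |∫ x in S \ A, φ x ∂ν| ≤ κ * (b - α) := by
    rw [← hdiff]
    exact norm_setIntegral_le_of_norm_le_const (f := φ)
      (lt_of_le_of_lt (measure_mono sdiff_subset) hSf.lt_top) fun x hx => hφ x hx.1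
  rw [hsplit] at h2
  set IA := ∫ x in A, φ x ∂ν
  set IS := ∫ x in S, φ x ∂ν
  have e : IA / α - IS / b = (IA / α) * ((b - α) / b) - (IS - IA) / b := by
    field_simp; ring
  rw [e]
  have h3 : |IA / α| ≤ κ := by
    rw [abs_div, abs_of_pos hα, div_le_iff₀ hα]; exact h1
  have h4 : |(IS - IA) / b| ≤ κ * ((b - α) / b) := by
    rw [abs_div, abs_of_pos hb, ← mul_div_assoc]; gcongr
  have h5 : 0 ≤ (b - α) / b := div_nonneg (by linarith) hb.le
  have h6 : |IA / α * ((b - α) / b)| ≤ κ * ((b - α) / b) := by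
    rw [abs_mul, abs_of_nonneg h5]; gcongr
  have h7 := norm_sub_le (IA / α * ((b - α) / b)) ((IS - IA) / b)
  simp only [Real.norm_eq_abs] at h7
  linarith

lemma abs_inner_sq_le {E : Type*} [NormedAddCommGroup E] [InnerProductSpace ℝ E] (a b : E) :
    ⟪a, b⟫ ^ 2 ≤ ‖a‖ ^ 2 * ‖b‖ ^ 2 := by
  rw [← mul_pow, ← sq_abs]
  exact pow_le_pow_left₀ (abs_nonneg _) (abs_real_inner_le_norm a b) 2

namespace Setup
variable {m : ℕ} {Ω : Set (EuclideanSpace ℝ (Fin (m+1)))} {ε : ℝ}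
    {u : EuclideanSpace ℝ (Fin (m+1)) → ℝ} {B M : ℝ} {p q : EuclideanSpace ℝ (Fin (m+1))}

lemma cT_mem_of (S : Setup m Ω ε u B M p q) {r : EuclideanSpace ℝ (Fin (m+1))}
    (hr : r ∈ closure Ω) {σ : ℝ} (h0 : 0 < σ) (h1 : σ ≤ 1)
    {z : EuclideanSpace ℝ (Fin (m+1))} (hz : z ∈ Ω) : cT r σ z ∈ Ω := by
  have := S.hconv.combo_closure_interior_mem_interior hr (by rwa [S.hopen.interior_eq])
    (sub_nonneg.2 h1) h0 (by ring)
  rwa [S.hopen.interior_eq] at this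

lemma cT_zero (S : Setup m Ω ε u B M p q) (σ : ℝ) (z : EuclideanSpace ℝ (Fin (m+1))) :
    (cT p σ z) 0 = σ * z 0 := by
  simp [cT, S.hp0]

lemma ω_pos (S : Setup m Ω ε u B M p q) {s : ℝ} (hs : s ∈ Ioo (0:ℝ) 1) : 0 < ωvol Ω s ∧
    volume (cross Ω s) ≠ ⊤ := by
  have h1 : volume (cross Ω s) ≠ ⊤ := by
    have : cross Ω s ⊆ Metric.ball 0 ε := fun y hy => by
      have := (S.hsub _ hy).2
      rw [yPt_mkPt] at this
      simpa using this
    exact ne_top_of_le_ne_top measure_ball_lt_top.ne (measure_mono this)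
  refine ⟨ENNReal.toReal_pos ?_ h1, h1⟩
  exact ((isOpen_cross S.hopen s).measure_pos _ (S.hne s hs)).ne'

lemma ω_le (S : Setup m Ω ε u B M p q) (s : ℝ) :
    ωvol Ω s ≤ volume.real (Metric.ball (0 : EuclideanSpace ℝ (Fin m)) ε) := by
  have : cross Ω s ⊆ Metric.ball 0 ε := fun y hy => by
    have := (S.hsub _ hy).2
    rw [yPt_mkPt] at this
    simpa using this
  exact measureReal_mono this measure_ball_lt_top.ne

lemma max_le_one (S : Setup m Ω ε u B M p q) {t : ℝ} (ht : t ∈ Ioo (0:ℝ) 1) :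
    max (min t (1 - t)) ε ≤ 1 :=
  max_le ((min_le_left _ _).trans ht.2.le) (by have := S.hε4; linarith)

lemma norm_fderiv (S : Setup m Ω ε u B M p q) (z : EuclideanSpace ℝ (Fin (m+1))) :
    ‖fderiv ℝ u z‖ = ‖gradient u z‖ := by
  simp [gradient]

lemma osc (S : Setup m Ω ε u B M p q) {z w : EuclideanSpace ℝ (Fin (m+1))} (hz : z ∈ Ω)
    (hw : w ∈ Ω) {t : ℝ} (hzt : z 0 = t) (hwt : w 0 = t) :
    |u z - u w| ≤ 2 * ε * (B * max (min t (1 - t)) ε) := by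
  have hs : Convex ℝ (Ω ∩ {v | v 0 = t}) := by
    refine S.hconv.inter ?_
    intro a ha b hb α β _ _ hαβ
    simp only [mem_ofPred_eq] at ha hb ⊢
    simp [ha, hb, ← add_mul, hαβ]
  have h := hs.norm_image_sub_le_of_norm_fderiv_le (f := u) (𝕜 := ℝ)
    (C := B * max (min t (1 - t)) ε) (fun x hx => S.hd x hx.1)
    (fun x hx => by
      have := S.hg x hx.1
      rw [S.norm_fderiv]
      have h2 : x 0 = t := hx.2
      rwa [h2] at this) ⟨hw, hwt⟩ ⟨hz, hzt⟩
  have hn : ‖z - w‖ ≤ 2 * ε := by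
    have h1 : ‖z - w‖ ^ 2 = ‖yPt z - yPt w‖ ^ 2 := by
      rw [← mkPt_yPt z, ← mkPt_yPt w, mkPt_sub, norm_mkPt_sq, hzt, hwt, yPt_mkPt, yPt_mkPt]
      simp
    have h2 : ‖yPt z - yPt w‖ ≤ 2 * ε := by
      have := norm_sub_le (yPt z) (yPt w)
      have := (S.hsub z hz).2
      have := (S.hsub w hw).2
      linarith
    have h3 : ‖z - w‖ = ‖yPt z - yPt w‖ := by
      rwa [pow_left_inj₀ (norm_nonneg _) (norm_nonneg _) two_ne_zero] at h1
    rw [h3]; exact h2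
  have hε := S.hε
  have hB0 := S.hB0
  calc |u z - u w| ≤ _ := h
    _ ≤ B * max (min t (1 - t)) ε * (2 * ε) := by
      gcongr
    _ = _ := by ring

lemma lip (S : Setup m Ω ε u B M p q) {z w : EuclideanSpace ℝ (Fin (m+1))} (hz : z ∈ Ω)
    (hw : w ∈ Ω) : |u z - u w| ≤ B * ‖z - w‖ := by
  refine S.hconv.norm_image_sub_le_of_norm_fderiv_le (f := u) (𝕜 := ℝ) (C := B)
    (fun x hx => S.hd x hx) (fun x hx => ?_) hw hz
  rw [S.norm_fderiv]
  calc _ ≤ _ := S.hg x hx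
    _ ≤ B * 1 := mul_le_mul_of_nonneg_left (S.max_le_one (S.hsub x hx).1) S.hB0
    _ = B := mul_one B

lemma lip' (S : Setup m Ω ε u B M p q) {z w : EuclideanSpace ℝ (Fin (m+1))} (hz : z ∈ Ω)
    (hw : w ∈ Ω) : |u z - u w| ≤ B * (|z 0 - w 0| + 2 * ε) := by
  refine (S.lip hz hw).trans (mul_le_mul_of_nonneg_left ?_ S.hB0)
  have h2 : ‖yPt z - yPt w‖ ≤ 2 * ε := by
    have := norm_sub_le (yPt z) (yPt w)
    have := (S.hsub z hz).2
    have := (S.hsub w hw).2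
    linarith
  refine le_trans ?_ (add_le_add_right h2 _)
  have h1 : ‖z - w‖ ^ 2 = (z 0 - w 0) ^ 2 + ‖yPt z - yPt w‖ ^ 2 := by
    conv_lhs => rw [← mkPt_yPt z, ← mkPt_yPt w, mkPt_sub, norm_mkPt_sq]
  refine abs_le_of_sq_le_sq' ?_ (by positivity) |>.2
  rw [h1]
  nlinarith [sq_abs (z 0 - w 0), abs_nonneg (z 0 - w 0), norm_nonneg (yPt z - yPt w)]

lemma ray (S : Setup m Ω ε u B M p q) {z : EuclideanSpace ℝ (Fin (m+1))} (hz : z ∈ Ω)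
    (hzε : ε ≤ z 0) {τ : ℝ} (hτ : 0 < τ) (hτ1 : τ < 1) :
    ((u z - u (cT p τ z)) / ((1 - τ) * z 0)) ^ 2 ≤
      (1 / (1 - τ)) * (∫ σ in Ioc τ 1, ‖gradient u (cT p σ z)‖ ^ 2) + 4 * ε ^ 2 * B ^ 2 := by
  have hε := S.hε
  set s := z 0 with hs
  have hs0 : 0 < s := hε.trans_le hzε
  have hmem : ∀ σ ∈ Icc τ 1, cT p σ z ∈ Ω := fun σ hσ =>
    S.cT_mem_of S.hp (hτ.trans_le hσ.1) hσ.2 hz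
  have hcc : Continuous fun σ : ℝ => cT p σ z := by unfold cT; fun_prop
  have hgc : ContinuousOn (fun σ => gradient u (cT p σ z)) (Icc τ 1) :=
    S.hc.comp hcc.continuousOn hmem
  have hder : ∀ σ ∈ uIcc τ 1, HasDerivAt (fun σ => u (cT p σ z))
      ⟪gradient u (cT p σ z), z - p⟫ σ := by
    intro σ hσ
    rw [uIcc_of_le hτ1.le] at hσ
    have h1 : HasDerivAt (fun σ : ℝ => cT p σ z) (z - p) σ := by
      have h2 : (fun σ : ℝ => cT p σ z) = fun σ : ℝ => p + σ • (z - p) := by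
        ext1 σ; simp only [cT]; module
      rw [h2]
      simpa using ((hasDerivAt_id σ).smul_const (z - p)).const_add p
    have h3 := (S.hd _ (hmem σ hσ)).hasFDerivAt.comp_hasDerivAt σ h1
    have h4 : ⟪gradient u (cT p σ z), z - p⟫ = fderiv ℝ u (cT p σ z) (z - p) := by
      simp [gradient]
    rw [h4]
    exact h3
  have hfc : ContinuousOn (fun σ => ⟪gradient u (cT p σ z), z - p⟫) (Icc τ 1) :=
    hgc.inner continuousOn_const
  have hFTC := intervalIntegral.integral_eq_sub_of_hasDerivAt hder
    (by rw [← uIcc_of_le hτ1.le] at hfc; exact hfc.intervalIntegrable)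
  have hT1 : cT p 1 z = z := by simp [cT]
  rw [hT1, intervalIntegral.integral_of_le hτ1.le] at hFTC
  have hfi : IntegrableOn (fun σ => ⟪gradient u (cT p σ z), z - p⟫) (Ioc τ 1) :=
    (hfc.integrableOn_compact isCompact_Icc).mono_set Ioc_subset_Icc_self
  have hf2i : IntegrableOn (fun σ => ⟪gradient u (cT p σ z), z - p⟫ ^ 2) (Ioc τ 1) :=
    ((hfc.pow 2).integrableOn_compact isCompact_Icc).mono_set Ioc_subset_Icc_self
  have hg2i : IntegrableOn (fun σ => ‖gradient u (cT p σ z)‖ ^ 2) (Ioc τ 1) :=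
    ((hgc.norm.pow 2).integrableOn_compact isCompact_Icc).mono_set Ioc_subset_Icc_self
  have hJ := jensen_sq hfi hf2i
  rw [hFTC] at hJ
  have hV : (volume.restrict (Ioc τ 1)).real univ = 1 - τ := by
    simp [Measure.real, hτ1.le]
  rw [hV] at hJ
  have hzp : ‖z - p‖ ^ 2 ≤ s ^ 2 + 4 * ε ^ 2 := by
    have h1 : ‖z - p‖ ^ 2 = (z 0 - p 0) ^ 2 + ‖yPt z - yPt p‖ ^ 2 := by
      conv_lhs => rw [← mkPt_yPt z, ← mkPt_yPt p, mkPt_sub, norm_mkPt_sq]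
    have h2 : ‖yPt z - yPt p‖ ≤ 2 * ε := by
      have := norm_sub_le (yPt z) (yPt p)
      have := (S.hsub z hz).2
      have := S.hpy
      linarith
    rw [h1, S.hp0, ← hs]
    nlinarith [norm_nonneg (yPt z - yPt p)]
  have hpt : ∀ σ ∈ Ioc τ 1, ⟪gradient u (cT p σ z), z - p⟫ ^ 2 ≤
      s ^ 2 * (‖gradient u (cT p σ z)‖ ^ 2 + 4 * ε ^ 2 * B ^ 2) := by
    intro σ hσ
    have hm := hmem σ (Ioc_subset_Icc_self hσ)
    have h1 := abs_inner_sq_le (gradient u (cT p σ z)) (z - p)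
    have h2 : ‖gradient u (cT p σ z)‖ ≤ B * s := by
      refine (S.hg _ hm).trans (mul_le_mul_of_nonneg_left ?_ S.hB0)
      refine max_le ((min_le_left _ _).trans ?_) hzε
      rw [S.cT_zero, ← hs]
      nlinarith [hσ.2]
    have h3 : ‖gradient u (cT p σ z)‖ ^ 2 ≤ B ^ 2 * s ^ 2 := by
      rw [← mul_pow]; exact pow_le_pow_left₀ (norm_nonneg _) h2 2
    calc _ ≤ _ := h1
      _ ≤ ‖gradient u (cT p σ z)‖ ^ 2 * (s ^ 2 + 4 * ε ^ 2) := by gcongr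
      _ ≤ _ := by nlinarith [mul_le_mul_of_nonneg_right h3 (show 0 ≤ 4 * ε ^ 2 by positivity)]
  have hcmp : ∫ σ in Ioc τ 1, ⟪gradient u (cT p σ z), z - p⟫ ^ 2 ≤
      s ^ 2 * ((∫ σ in Ioc τ 1, ‖gradient u (cT p σ z)‖ ^ 2) + (1 - τ) * (4 * ε ^ 2 * B ^ 2)) := by
    have hcI : IntegrableOn (fun _ : ℝ => 4 * ε ^ 2 * B ^ 2) (Ioc τ 1) :=
      integrableOn_const (by simp)
    have hsI : IntegrableOn (fun σ => ‖gradient u (cT p σ z)‖ ^ 2 + 4 * ε ^ 2 * B ^ 2) (Ioc τ 1) :=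
      hg2i.add hcI
    calc _ ≤ ∫ σ in Ioc τ 1, s ^ 2 * (‖gradient u (cT p σ z)‖ ^ 2 + 4 * ε ^ 2 * B ^ 2) :=
          setIntegral_mono_on hf2i (hsI.const_mul _)
            measurableSet_Ioc hpt
      _ = _ := by
          rw [integral_const_mul, integral_add hg2i hcI,
            integral_const, hV, smul_eq_mul]
  set J := ∫ σ in Ioc τ 1, ‖gradient u (cT p σ z)‖ ^ 2
  have hτ' : 0 < 1 - τ := by linarith
  rw [div_pow, div_le_iff₀ (by positivity)]
  calc _ ≤ _ := hJ
    _ ≤ (1 - τ) * _ := mul_le_mul_of_nonneg_left hcmp hτ'.le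
    _ = _ := by field_simp

end Setup
namespace Setup
variable {m : ℕ} {Ω : Set (EuclideanSpace ℝ (Fin (m+1)))} {ε : ℝ}
    {u : EuclideanSpace ℝ (Fin (m+1)) → ℝ} {B M : ℝ} {p q : EuclideanSpace ℝ (Fin (m+1))}

lemma tr (p : EuclideanSpace ℝ (Fin (m+1))) (σ s : ℝ) (y : EuclideanSpace ℝ (Fin m)) :
    cT p σ (mkPt m s y) = mkPt m ((1 - σ) * p 0 + σ * s) (cT (yPt p) σ y) := by
  conv_lhs => rw [← mkPt_yPt p]
  simp only [cT]
  rw [mkPt_combo]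

lemma img_sub (S : Setup m Ω ε u B M p q) {r : EuclideanSpace ℝ (Fin (m+1))}
    (hr : r ∈ closure Ω) {σ : ℝ} (h0 : 0 < σ) (h1 : σ ≤ 1) {s t : ℝ}
    (ht : (1 - σ) * r 0 + σ * s = t) : cT (yPt r) σ '' cross Ω s ⊆ cross Ω t := by
  rintro _ ⟨y, hy, rfl⟩
  have := S.cT_mem_of hr h0 h1 hy
  rw [tr, ht] at this
  exact this

lemma ω_contr (S : Setup m Ω ε u B M p q) {r : EuclideanSpace ℝ (Fin (m+1))}
    (hr : r ∈ closure Ω) {σ : ℝ} (h0 : 0 < σ) (h1 : σ ≤ 1) {s t : ℝ}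
    (ht : (1 - σ) * r 0 + σ * s = t) (htt : t ∈ Ioo (0:ℝ) 1) : σ ^ m * ωvol Ω s ≤ ωvol Ω t := by
  have := measureReal_mono (S.img_sub hr h0 h1 ht) (S.ω_pos htt).2
  rwa [vol_image_cT _ h0] at this

lemma ω_ratio (S : Setup m Ω ε u B M p q) {τ s : ℝ} (hτ : 0 < τ) (hτ1 : τ < 1)
    (hs : s ∈ Ioo (0:ℝ) 1) :
    (ωvol Ω (τ * s) - τ ^ m * ωvol Ω s) / ωvol Ω (τ * s) ≤ m * (1 - τ) / (1 - s) := by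
  obtain ⟨hs0, hs1⟩ := hs
  have hτs : τ * s ∈ Ioo (0:ℝ) 1 := ⟨by positivity, by nlinarith⟩
  have hb := (S.ω_pos hτs).1
  have hd : 0 < 1 - τ * s := by linarith [hτs.2]
  have hd' : 0 < 1 - s := by linarith
  have hsd : τ * s ≤ s := by nlinarith
  set ρ := (1 - s) / (1 - τ * s) with hρ
  have hρ0 : 0 < ρ := by positivity
  have hρ1 : ρ ≤ 1 := by rw [hρ, div_le_one hd]; linarith
  have hρd : ρ * (1 - τ * s) = 1 - s := div_mul_cancel₀ _ hd.ne'
  have h1 := S.ω_contr S.hq hρ0 hρ1 (s := τ * s) (t := s)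
    (by rw [S.hq0]; linarith) ⟨hs0, hs1⟩
  have h2 := one_add_mul_le_pow (a := τ * ρ - 1) (by nlinarith [mul_pos hτ hρ0]) m
  have e1 : 1 - τ * ρ = (1 - τ) / (1 - τ * s) := by rw [hρ]; field_simp; ring
  have h3 : 1 - τ * ρ ≤ (1 - τ) / (1 - s) := by
    rw [e1]; gcongr
  have h4 : (τ * ρ) ^ m * ωvol Ω (τ * s) ≤ τ ^ m * ωvol Ω s := by
    rw [mul_pow, mul_assoc]; gcongr
  rw [add_sub_cancel] at h2
  rw [div_le_iff₀ hb]
  have h5 : 1 - (τ * ρ) ^ m ≤ m * (1 - τ) / (1 - s) := by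
    have : (m:ℝ) * (1 - τ * ρ) ≤ m * ((1 - τ) / (1 - s)) := by gcongr
    rw [mul_div_assoc]
    linarith
  nlinarith [mul_le_mul_of_nonneg_right h5 hb.le]

lemma cont_u (S : Setup m Ω ε u B M p q) : ContinuousOn u Ω := fun z hz =>
  (S.hd z hz).continuousAt.continuousWithinAt

lemma contOn_cross (S : Setup m Ω ε u B M p q) (s : ℝ) :
    ContinuousOn (fun y => u (mkPt m s y)) (cross Ω s) :=
  S.cont_u.comp (continuous_mkPt_right m s).continuousOn fun _ hy => hy

lemma int_cross (S : Setup m Ω ε u B M p q) {s : ℝ} (hs : s ∈ Ioo (0:ℝ) 1) :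
    IntegrableOn (fun y => u (mkPt m s y)) (cross Ω s) :=
  intOn_of_bdd (isOpen_cross S.hopen s).measurableSet (S.ω_pos hs).2
    ((S.contOn_cross s).aestronglyMeasurable (isOpen_cross S.hopen s).measurableSet) M
    fun y hy => S.hM _ hy

lemma cov (φ : EuclideanSpace ℝ (Fin m) → ℝ) (a : EuclideanSpace ℝ (Fin m)) {τ : ℝ} (hτ : 0 < τ)
    {A : Set (EuclideanSpace ℝ (Fin m))} (hA : MeasurableSet A) (hA' : MeasurableSet (cT a τ '' A)) :
    ∫ y in cT a τ '' A, φ y = τ ^ m * ∫ y in A, φ (cT a τ y) := by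
  have h := int_comp_cT ((cT a τ '' A).indicator φ) a hτ
  rw [integral_indicator hA'] at h
  have : (fun z => (cT a τ '' A).indicator φ (cT a τ z)) = A.indicator fun z => φ (cT a τ z) := by
    ext z
    by_cases hz : z ∈ A
    · rw [indicator_of_mem hz, indicator_of_mem (mem_image_of_mem _ hz)]
    · rw [indicator_of_notMem hz, indicator_of_notMem]
      rwa [(cT_inj a hτ).mem_set_image]
  rw [this, integral_indicator hA] at h
  rw [h]; field_simp

lemma meas_img {d : ℕ} (a : EuclideanSpace ℝ (Fin d)) {τ : ℝ} (hτ : 0 < τ)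
    {A : Set (EuclideanSpace ℝ (Fin d))} (hA : IsOpen A) : MeasurableSet (cT a τ '' A) := by
  have h : cT a τ = AffineMap.homothety a τ := by
    ext1 z; simp only [cT, AffineMap.homothety_apply, vsub_eq_sub, vadd_eq_add]; module
  rw [h]
  exact ((AffineMap.homothety_isOpenMap a τ hτ.ne') A hA).measurableSet

lemma section_est (S : Setup m Ω ε u B M p q) {τ s : ℝ} (hτ : 0 < τ) (hτ1 : τ < 1)
    (hs : s ∈ Ioo (0:ℝ) 1) :
    |(∫ y in cross Ω s, u (cT p τ (mkPt m s y))) / ωvol Ω s - ubarFn Ω u (τ * s)| ≤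
      2 * (2 * ε * (B * max (min (τ * s) (1 - τ * s)) ε)) * (m * (1 - τ) / (1 - s)) := by
  have hτs : τ * s ∈ Ioo (0:ℝ) 1 := ⟨by have := hs.1; positivity, by nlinarith [hs.1, hs.2]⟩
  have hω := S.ω_pos hs
  have hω' := S.ω_pos hτs
  have ht : (1 - τ) * p 0 + τ * s = τ * s := by rw [S.hp0]; ring
  set A := cT (yPt p) τ '' cross Ω s with hA
  have hAm : MeasurableSet A := meas_img _ hτ (isOpen_cross S.hopen s)
  have hAs : A ⊆ cross Ω (τ * s) := S.img_sub S.hp hτ hτ1.le ht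
  have hAv : volume.real A = τ ^ m * ωvol Ω s := vol_image_cT _ hτ _
  have hApos : 0 < volume.real A := by rw [hAv]; exact mul_pos (by positivity) hω.1
  have hAfin : volume A ≠ ⊤ := ne_top_of_le_ne_top hω'.2 (measure_mono hAs)
  obtain ⟨y0, hy0⟩ := S.hne _ hτs
  set c := u (mkPt m (τ * s) y0) with hc
  have hi := S.int_cross hτs
  have hci : IntegrableOn (fun _ : EuclideanSpace ℝ (Fin m) => c) (cross Ω (τ * s)) :=
    integrableOn_const hω'.2
  have h := avg_compare (ν := volume) (φ := fun y => u (mkPt m (τ * s) y) - c)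
    (κ := 2 * ε * (B * max (min (τ * s) (1 - τ * s)) ε)) hAs hAm
    (isOpen_cross S.hopen _).measurableSet hω'.2 hApos (hi.sub hci)
    (fun y hy => S.osc hy hy0 (mkPt_zero ..) (mkPt_zero ..))
  rw [integral_sub (hi.mono_set hAs) (hci.mono_set hAs), integral_sub hi hci, setIntegral_const,
    setIntegral_const, cov _ _ hτ (isOpen_cross S.hopen _).measurableSet hAm] at h
  have e1 : ∀ y, mkPt m (τ * s) (cT (yPt p) τ y) = cT p τ (mkPt m s y) := fun y => by
    rw [tr, ht]
  simp_rw [e1] at h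
  have e2 : volume.real (cross Ω (τ * s)) = ωvol Ω (τ * s) := rfl
  have hω1 := hω.1
  have hω1' := hω'.1
  rw [hAv, e2] at h
  have e3 : (τ ^ m * (∫ y in cross Ω s, u (cT p τ (mkPt m s y))) - (τ ^ m * ωvol Ω s) • c) /
      (τ ^ m * ωvol Ω s) - ((∫ y in cross Ω (τ * s), u (mkPt m (τ * s) y)) - ωvol Ω (τ * s) • c) /
      ωvol Ω (τ * s) =
      (∫ y in cross Ω s, u (cT p τ (mkPt m s y))) / ωvol Ω s - ubarFn Ω u (τ * s) := by
    rw [ubarFn, smul_eq_mul, smul_eq_mul]; field_simp; ring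
  rw [e3] at h
  refine h.trans (mul_le_mul_of_nonneg_left (S.ω_ratio hτ hτ1 hs) ?_)
  have := S.hε; have := S.hB0
  have : 0 ≤ max (min (τ * s) (1 - τ * s)) ε := le_max_of_le_right S.hε.le
  positivity

end Setup

/-- difference quotient along rays, with `u` extended by zero -/
def dq {m : ℕ} (Ω : Set (EuclideanSpace ℝ (Fin (m+1)))) (u : EuclideanSpace ℝ (Fin (m+1)) → ℝ)
    (p : EuclideanSpace ℝ (Fin (m+1))) (τ : ℝ) (z : EuclideanSpace ℝ (Fin (m+1))) : ℝ :=
  (Ω.indicator u z - Ω.indicator u (cT p τ z)) / ((1 - τ) * z 0)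

/-- averaged difference quotient -/
def Dq {m : ℕ} (Ω : Set (EuclideanSpace ℝ (Fin (m+1)))) (u : EuclideanSpace ℝ (Fin (m+1)) → ℝ)
    (p : EuclideanSpace ℝ (Fin (m+1))) (ε : ℝ) : ℝ → ℝ :=
  (Icc ε (1 - ε)).indicator
    fun s => (∫ y in cross Ω s, dq Ω u p (1 - ε) (mkPt m s y)) / ωvol Ω s

/-- logarithmic average -/
def Hf {m : ℕ} (Ω : Set (EuclideanSpace ℝ (Fin (m+1)))) (u : EuclideanSpace ℝ (Fin (m+1)) → ℝ)
    (ε x : ℝ) : ℝ := (1 / ε) * ∫ t in ((1 - ε) * x)..x, ubarFn Ω u t / t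

/-- test function -/
def gf {m : ℕ} (Ω : Set (EuclideanSpace ℝ (Fin (m+1)))) (u : EuclideanSpace ℝ (Fin (m+1)) → ℝ)
    (p : EuclideanSpace ℝ (Fin (m+1))) (ε x : ℝ) : ℝ :=
  Hf Ω u ε ε + ∫ t in ε..x, Dq Ω u p ε t

lemma indicator_int {m : ℕ} (Ω : Set (EuclideanSpace ℝ (Fin (m+1)))) (hΩ : IsOpen Ω)
    (u : EuclideanSpace ℝ (Fin (m+1)) → ℝ) (s : ℝ) :
    ∫ y in cross Ω s, Ω.indicator u (mkPt m s y) = ∫ y in cross Ω s, u (mkPt m s y) :=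
  setIntegral_congr_fun (isOpen_cross hΩ s).measurableSet fun y hy =>
    indicator_of_mem (show mkPt m s y ∈ Ω from hy) u

namespace Setup
variable {m : ℕ} {Ω : Set (EuclideanSpace ℝ (Fin (m+1)))} {ε : ℝ}
    {u : EuclideanSpace ℝ (Fin (m+1)) → ℝ} {B M : ℝ} {p q : EuclideanSpace ℝ (Fin (m+1))}

lemma meas_ind {F : EuclideanSpace ℝ (Fin (m+1)) → ℝ} (hΩ : IsOpen Ω) (hF : ContinuousOn F Ω) :
    Measurable (Ω.indicator F) := by
  classical
  rw [← piecewise_eq_indicator]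
  exact hF.measurable_piecewise continuousOn_const hΩ.measurableSet

lemma meas_dq (S : Setup m Ω ε u B M p q) (τ : ℝ) : Measurable (dq Ω u p τ) := by
  have h := meas_ind S.hopen S.cont_u
  have hc : Measurable (cT p τ) := by
    have : Continuous (cT p τ) := by unfold cT; fun_prop
    exact this.measurable
  unfold dq
  refine (h.sub (h.comp hc)).div ?_
  exact (by fun_prop : Continuous fun z : EuclideanSpace ℝ (Fin (m+1)) =>
    (1 - τ) * z 0).measurable

lemma meas_Dq (S : Setup m Ω ε u B M p q) : Measurable (Dq Ω u p ε) :=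
  Measurable.indicator ((fubini_meas S.hopen.measurableSet (S.meas_dq _)).div
    (meas_ωvol S.hopen.measurableSet)) measurableSet_Icc

lemma meas_ubar (S : Setup m Ω ε u B M p q) : Measurable (ubarFn Ω u) := by
  have h := (fubini_meas S.hopen.measurableSet (meas_ind S.hopen S.cont_u)).div
    (meas_ωvol S.hopen.measurableSet)
  convert h using 1
  ext s
  rw [ubarFn, ← indicator_int Ω S.hopen]
  rfl

lemma ubar_sub (S : Setup m Ω ε u B M p q) {s : ℝ} (hs : s ∈ Ioo (0:ℝ) 1) {c k : ℝ}
    (h : ∀ y ∈ cross Ω s, |u (mkPt m s y) - c| ≤ k) : |ubarFn Ω u s - c| ≤ k := by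
  have hω := S.ω_pos hs
  have h1 := norm_setIntegral_le_of_norm_le_const (μ := volume) (f := fun y => u (mkPt m s y) - c)
    hω.2.lt_top h
  rw [integral_sub (S.int_cross hs) (integrableOn_const hω.2), setIntegral_const] at h1
  have e2 : volume.real (cross Ω s) = ωvol Ω s := rfl
  rw [e2, Real.norm_eq_abs, smul_eq_mul] at h1
  have hp := hω.1
  have : ubarFn Ω u s - c = ((∫ y in cross Ω s, u (mkPt m s y)) - ωvol Ω s * c) / ωvol Ω s := by
    rw [ubarFn]; field_simp
  rw [this, abs_div, abs_of_pos hp, div_le_iff₀ hp]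
  exact h1

lemma ubar_abs (S : Setup m Ω ε u B M p q) {s : ℝ} (hs : s ∈ Ioo (0:ℝ) 1) : |ubarFn Ω u s| ≤ M := by
  have := S.ubar_sub hs (c := 0) (k := M) (fun y hy => by simpa using S.hM _ hy)
  simpa using this

lemma ubar_lip (S : Setup m Ω ε u B M p q) {s : ℝ} (hs : s ∈ Ioo (0:ℝ) 1)
    {z : EuclideanSpace ℝ (Fin (m+1))} (hz : z ∈ Ω) :
    |ubarFn Ω u s - u z| ≤ B * (|s - z 0| + 2 * ε) :=
  S.ubar_sub hs fun y hy => by simpa [mkPt_zero] using S.lip' hy hz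

lemma Dq_est (S : Setup m Ω ε u B M p q) {s : ℝ} (hs : s ∈ Icc ε (1 - ε)) :
    |Dq Ω u p ε s - (1 / ε) * ((ubarFn Ω u s - ubarFn Ω u ((1 - ε) * s)) / s)| ≤
      16 * m * ε * B := by
  have hε := S.hε
  have hε4 := S.hε4
  have hB0 := S.hB0
  have hs' : s ∈ Ioo (0:ℝ) 1 := ⟨by linarith [hs.1], by linarith [hs.2]⟩
  have hs0 := hs'.1
  have hs1 : 0 < 1 - s := by linarith [hs'.2]
  have hω := S.ω_pos hs'
  have hω1 := hω.1
  have hτ : 0 < 1 - ε := by linarith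
  have hmc : ∀ y ∈ cross Ω s, cT p (1 - ε) (mkPt m s y) ∈ Ω := fun y hy =>
    S.cT_mem_of S.hp hτ (by linarith) hy
  have e1 : ∫ y in cross Ω s, dq Ω u p (1 - ε) (mkPt m s y) =
      ((∫ y in cross Ω s, u (mkPt m s y)) - ∫ y in cross Ω s, u (cT p (1 - ε) (mkPt m s y))) /
        (ε * s) := by
    have hi2 : IntegrableOn (fun y => u (cT p (1 - ε) (mkPt m s y))) (cross Ω s) := by
      refine intOn_of_bdd (isOpen_cross S.hopen s).measurableSet hω.2
        (ContinuousOn.aestronglyMeasurable ?_ (isOpen_cross S.hopen s).measurableSet) M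
        fun y hy => S.hM _ (hmc y hy)
      have hcc : Continuous (cT p (1 - ε)) := by unfold cT; fun_prop
      exact S.cont_u.comp (hcc.comp (continuous_mkPt_right m s)).continuousOn hmc
    rw [← integral_sub (S.int_cross hs') hi2, ← integral_div]
    refine setIntegral_congr_fun (isOpen_cross S.hopen s).measurableSet fun y hy => ?_
    simp only [dq]
    rw [indicator_of_mem (show mkPt m s y ∈ Ω from hy), indicator_of_mem (hmc y hy), mkPt_zero]
    congr 1; ring
  have hsec := S.section_est hτ (by linarith) hs'
  set A := (∫ y in cross Ω s, u (cT p (1 - ε) (mkPt m s y)))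
  have e2 : Dq Ω u p ε s - (1 / ε) * ((ubarFn Ω u s - ubarFn Ω u ((1 - ε) * s)) / s) =
      -((A / ωvol Ω s - ubarFn Ω u ((1 - ε) * s)) / (ε * s)) := by
    rw [Dq, indicator_of_mem hs, e1]
    have : ∫ y in cross Ω s, u (mkPt m s y) = ubarFn Ω u s * ωvol Ω s := by
      rw [ubarFn]; field_simp
    rw [this]; field_simp; ring
  rw [e2, abs_neg, abs_div, abs_of_pos (show 0 < ε * s by positivity), div_le_iff₀ (by positivity)]
  refine hsec.trans ?_
  have hmax : max (min ((1 - ε) * s) (1 - (1 - ε) * s)) ε ≤ 4 * (s * (1 - s)) := by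
    obtain ⟨ha, hb⟩ := hs
    refine max_le ?_ ?_
    · rcases le_total s (1/2) with h | h
      · exact (min_le_left _ _).trans (by nlinarith)
      · exact (min_le_right _ _).trans (by nlinarith)
    · rcases le_total s (1/2) with h | h
      · nlinarith
      · nlinarith
  calc _ ≤ 2 * (2 * ε * (B * (4 * (s * (1 - s))))) * (m * (1 - (1 - ε)) / (1 - s)) := by
        gcongr
        exact div_nonneg (mul_nonneg (Nat.cast_nonneg _) (by linarith)) hs1.le
    _ = _ := by field_simp; ring

lemma ii (S : Setup m Ω ε u B M p q) {a b : ℝ} (ha : 0 < a) (hab : a ≤ b) (hb : b < 1) :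
    IntervalIntegrable (fun t => ubarFn Ω u t / t) volume a b := by
  rw [intervalIntegrable_iff_integrableOn_Icc_of_le hab]
  refine intOn_of_bdd measurableSet_Icc (by simp)
    (S.meas_ubar.div measurable_id).aestronglyMeasurable (M / a) fun t ht => ?_
  have ht0 : 0 < t := ha.trans_le ht.1
  rw [abs_div, abs_of_pos ht0]
  have := S.ubar_abs (s := t) ⟨ht0, ht.2.trans_lt hb⟩
  have := S.hM0
  gcongr
  exact ht.1

lemma Dq_bdd (S : Setup m Ω ε u B M p q) :
    ∃ K : NNReal, ∀ s, |Dq Ω u p ε s| ≤ K := by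
  have hε := S.hε
  have hε4 := S.hε4
  have hB0 := S.hB0
  have hM0 := S.hM0
  refine ⟨⟨16 * m * ε * B + (1 / ε) * (2 * M / ε), by positivity⟩, fun s => ?_⟩
  by_cases hs : s ∈ Icc ε (1 - ε)
  · have hs' : s ∈ Ioo (0:ℝ) 1 := ⟨by linarith [hs.1], by linarith [hs.2]⟩
    have hs0 := hs'.1
    have h := S.Dq_est hs
    have h1 := S.ubar_abs hs'
    have h2 := S.ubar_abs (s := (1 - ε) * s) ⟨by nlinarith [hs'.1], by nlinarith [hs'.1, hs'.2]⟩
    have h3 : |(1 / ε) * ((ubarFn Ω u s - ubarFn Ω u ((1 - ε) * s)) / s)| ≤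
        (1 / ε) * (2 * M / ε) := by
      rw [abs_mul, abs_of_pos (by positivity : 0 < 1 / ε), abs_div, abs_of_pos hs'.1]
      have : |ubarFn Ω u s - ubarFn Ω u ((1 - ε) * s)| ≤ 2 * M :=
        (norm_sub_le (ubarFn Ω u s) (ubarFn Ω u ((1 - ε) * s))).trans (by
          rw [Real.norm_eq_abs, Real.norm_eq_abs]; linarith)
      gcongr
      exact hs.1
    have h4 := abs_sub_abs_le_abs_sub (Dq Ω u p ε s)
      ((1 / ε) * ((ubarFn Ω u s - ubarFn Ω u ((1 - ε) * s)) / s))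
    show _ ≤ 16 * m * ε * B + (1 / ε) * (2 * M / ε)
    linarith
  · rw [Dq, indicator_of_notMem hs, abs_zero]
    exact NNReal.coe_nonneg _

lemma Dq_ii (S : Setup m Ω ε u B M p q) (a b : ℝ) :
    IntervalIntegrable (Dq Ω u p ε) volume a b := by
  obtain ⟨K, hK⟩ := S.Dq_bdd
  rw [intervalIntegrable_iff]
  exact intOn_of_bdd measurableSet_uIoc (by rw [uIoc]; simp) S.meas_Dq.aestronglyMeasurable K
    fun t _ => hK t

lemma g_lip (S : Setup m Ω ε u B M p q) : ∃ K : NNReal, LipschitzWith K (gf Ω u p ε) := by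
  obtain ⟨K, hK⟩ := S.Dq_bdd
  refine ⟨K, LipschitzWith.of_dist_le_mul fun x y => ?_⟩
  have : gf Ω u p ε x - gf Ω u p ε y = ∫ t in y..x, Dq Ω u p ε t := by
    rw [gf, gf, add_sub_add_left_eq_sub,
      intervalIntegral.integral_interval_sub_left (S.Dq_ii _ _) (S.Dq_ii _ _)]
  rw [Real.dist_eq, this, Real.dist_eq]
  exact intervalIntegral.norm_integral_le_of_norm_le_const (f := Dq Ω u p ε) fun t _ => hK t

lemma g_deriv (S : Setup m Ω ε u B M p q) : ∀ᵐ x, deriv (gf Ω u p ε) x = Dq Ω u p ε x := by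
  obtain ⟨K, hK⟩ := S.Dq_bdd
  have hl : LocallyIntegrable (Dq Ω u p ε) := by
    refine (locallyIntegrable_const (K : ℝ)).mono S.meas_Dq.aestronglyMeasurable ?_
    refine Eventually.of_forall fun x => ?_
    simpa using hK x
  filter_upwards [_root_.LocallyIntegrable.ae_hasDerivAt_integral hl] with x hx
  exact ((hx ε).const_add (Hf Ω u ε ε)).deriv

lemma H_est (S : Setup m Ω ε u B M p q) {x c k : ℝ} (hx : x ∈ Icc ε (1 - ε))
    (h : ∀ t ∈ Icc ((1 - ε) * x) x, |ubarFn Ω u t - c| ≤ k) (hc : |c| ≤ M) :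
    |Hf Ω u ε x - c| ≤ 2 * k + 2 * ε * M := by
  have hε := S.hε
  have hε4 := S.hε4
  have hM0 := S.hM0
  have hx0 : 0 < x := by linarith [hx.1]
  have hτ : 0 < 1 - ε := by linarith
  have hle : (1 - ε) * x ≤ x := by nlinarith
  have hk : 0 ≤ k := (abs_nonneg _).trans (h x ⟨hle, le_rfl⟩)
  have e : Hf Ω u ε x - c = (1 / ε) * ∫ t in ((1 - ε) * x)..x, (ubarFn Ω u t / t - c / x) := by
    rw [intervalIntegral.integral_sub (S.ii (by positivity) hle (by linarith [hx.2]))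
      intervalIntegrable_const, intervalIntegral.integral_const, Hf, smul_eq_mul]
    field_simp; ring
  have hb := intervalIntegral.norm_integral_le_of_norm_le_const (a := (1 - ε) * x) (b := x)
    (f := fun t => ubarFn Ω u t / t - c / x) (C := (2 * k + 2 * ε * M) / x) (fun t ht => by
      rw [uIoc_of_le hle] at ht
      have ht0 : 0 < t := lt_trans (by positivity) ht.1
      have e2 : ubarFn Ω u t / t - c / x = ((ubarFn Ω u t - c) + c * ((x - t) / x)) / t := by
        field_simp; ring
      rw [e2, Real.norm_eq_abs, abs_div, abs_of_pos ht0, div_le_div_iff₀ ht0 hx0]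
      have h1 := h t ⟨ht.1.le, ht.2⟩
      have h2 : |c * ((x - t) / x)| ≤ M * ε := by
        rw [abs_mul, abs_of_nonneg (div_nonneg (by linarith [ht.2]) hx0.le)]
        have : (x - t) / x ≤ ε := by
          rw [div_le_iff₀ hx0]; linarith [ht.1]
        exact mul_le_mul hc this (div_nonneg (by linarith [ht.2]) hx0.le) hM0
      have h3 := abs_add_le (ubarFn Ω u t - c) (c * ((x - t) / x))
      have h4 : x ≤ 2 * t := by nlinarith [ht.1]
      calc _ ≤ (k + M * ε) * (2 * t) := by gcongr; linarith
        _ = _ := by ring)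
  rw [e, abs_mul, abs_of_pos (by positivity : 0 < 1 / ε)]
  rw [Real.norm_eq_abs] at hb
  calc _ ≤ 1 / ε * ((2 * k + 2 * ε * M) / x * |x - (1 - ε) * x|) := by gcongr
    _ = _ := by
      have : x - (1 - ε) * x = ε * x := by ring
      rw [this, abs_of_pos (by positivity)]; field_simp

lemma g_H (S : Setup m Ω ε u B M p q) {x : ℝ} (hx : x ∈ Icc ε (1 - ε)) :
    |gf Ω u p ε x - Hf Ω u ε x| ≤ 16 * m * ε * B := by
  have hε := S.hε
  have hε4 := S.hε4
  have hB0 := S.hB0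
  have hx0 : 0 < x := by linarith [hx.1]
  have hx1 : x < 1 := by linarith [hx.2]
  have hτ : 0 < 1 - ε := by linarith
  have hle : (1 - ε) * x ≤ x := by nlinarith
  have hleε : (1 - ε) * ε ≤ ε := by nlinarith
  have i1 := S.ii hε hx.1 hx1
  have i2 := S.ii (a := (1 - ε) * ε) (b := (1 - ε) * x) (by positivity)
    (by nlinarith [hx.1]) (by linarith)
  have i3 := S.ii (a := (1 - ε) * ε) (b := ε) (by positivity) hleε (by linarith)
  have hcov := intervalIntegral.mul_integral_comp_mul_left (a := ε) (b := x)
    (f := fun t => ubarFn Ω u t / t) (1 - ε)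
  have hsub := intervalIntegral.integral_interval_sub_interval_comm i1 i2 i3.symm
  have i4 : IntervalIntegrable (fun s => ubarFn Ω u ((1 - ε) * s) / s) volume ε x := by
    have := (i2.comp_mul_left (c := 1 - ε)).const_mul (1 - ε)
    simp only [mul_div_cancel_left₀ _ hτ.ne'] at this
    refine this.congr fun s hs => ?_
    rw [uIoc_of_le hx.1] at hs
    have : 0 < s := hε.trans hs.1
    field_simp
  have e1 : ∫ s in ε..x, (1 / ε) * ((ubarFn Ω u s - ubarFn Ω u ((1 - ε) * s)) / s) =
      Hf Ω u ε x - Hf Ω u ε ε := by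
    rw [intervalIntegral.integral_const_mul, Hf, Hf, ← mul_sub]
    congr 1
    have : ∀ s, (ubarFn Ω u s - ubarFn Ω u ((1 - ε) * s)) / s =
      ubarFn Ω u s / s - ubarFn Ω u ((1 - ε) * s) / s := fun s => sub_div _ _ _
    simp_rw [this]
    rw [intervalIntegral.integral_sub i1 i4]
    have e2 : ∫ s in ε..x, ubarFn Ω u ((1 - ε) * s) / s =
        ∫ t in ((1 - ε) * ε)..((1 - ε) * x), ubarFn Ω u t / t := by
      rw [← hcov, ← intervalIntegral.integral_const_mul]
      refine intervalIntegral.integral_congr fun s hs => ?_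
      rw [uIcc_of_le hx.1] at hs
      have : 0 < s := hε.trans_le hs.1
      field_simp
    rw [e2, hsub, intervalIntegral.integral_symm ((1 - ε) * x) x,
      intervalIntegral.integral_symm ((1 - ε) * ε) ε]
    ring
  have i5 : IntervalIntegrable
      (fun s => (1 / ε) * ((ubarFn Ω u s - ubarFn Ω u ((1 - ε) * s)) / s)) volume ε x := by
    have := (i1.sub i4).const_mul (1 / ε)
    simp only [← sub_div] at this
    exact this
  have e3 : gf Ω u p ε x - Hf Ω u ε x = ∫ s in ε..x, (Dq Ω u p ε s -
      (1 / ε) * ((ubarFn Ω u s - ubarFn Ω u ((1 - ε) * s)) / s)) := by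
    rw [intervalIntegral.integral_sub (S.Dq_ii _ _) i5, e1, gf]; ring
  rw [e3]
  have := intervalIntegral.norm_integral_le_of_norm_le_const (a := ε) (b := x)
    (f := fun s => Dq Ω u p ε s - (1 / ε) * ((ubarFn Ω u s - ubarFn Ω u ((1 - ε) * s)) / s))
    (C := 16 * m * ε * B) (fun s hs => by
      rw [uIoc_of_le hx.1] at hs
      exact S.Dq_est ⟨hs.1.le, hs.2.trans hx.2⟩)
  refine this.trans ?_
  have h1 : |x - ε| ≤ 1 := by rw [abs_of_nonneg (by linarith [hx.1])]; linarith
  exact mul_le_of_le_one_right (by positivity) h1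

lemma g_clamp (S : Setup m Ω ε u B M p q) (x : ℝ) :
    gf Ω u p ε x = gf Ω u p ε (max ε (min x (1 - ε))) := by
  have hε := S.hε
  have hε4 := S.hε4
  have key : ∀ y, (∀ t ∈ uIoc y x, Dq Ω u p ε t = 0 ∨ t = ε) → gf Ω u p ε x = gf Ω u p ε y := by
    intro y hy
    rw [← sub_eq_zero, gf, gf, add_sub_add_left_eq_sub,
      intervalIntegral.integral_interval_sub_left (S.Dq_ii _ _) (S.Dq_ii _ _)]
    refine intervalIntegral.integral_zero_ae ?_
    have : ∀ᵐ t : ℝ, t ≠ ε := by simp [ae_iff]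
    filter_upwards [this] with t ht h
    exact (hy t h).resolve_right ht
  apply key
  intro t ht
  rcases le_total x ε with h | h
  · have : max ε (min x (1 - ε)) = ε := max_eq_left ((min_le_left _ _).trans h)
    rw [this, uIoc_of_ge h] at ht
    rcases eq_or_lt_of_le ht.2 with h' | h'
    · exact Or.inr h'
    · left; exact indicator_of_notMem (fun hh => absurd hh.1 (not_le.2 h')) _
  · rcases le_total x (1 - ε) with h2 | h2
    · rw [min_eq_left h2, max_eq_right h, uIoc_of_le le_rfl, Ioc_self] at ht
      exact ht.elim
    · rw [min_eq_right h2, max_eq_right (by linarith), uIoc_of_le h2] at ht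
      left; exact indicator_of_notMem (fun hh => absurd hh.2 (not_le.2 ht.1)) _

lemma g_close (S : Setup m Ω ε u B M p q) {z : EuclideanSpace ℝ (Fin (m+1))} (hz : z ∈ Ω) :
    |gf Ω u p ε (z 0) - u z| ≤ 16 * m * ε * B + 8 * ε * B + 2 * ε * M := by
  have hε := S.hε
  have hε4 := S.hε4
  have hB0 := S.hB0
  have hz0 := (S.hsub z hz).1
  rw [S.g_clamp]
  set x := max ε (min (z 0) (1 - ε)) with hx
  have hxm : x ∈ Icc ε (1 - ε) :=
    ⟨le_max_left _ _, max_le (by linarith) (min_le_right _ _)⟩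
  have hxz : |x - z 0| ≤ ε := by
    rw [abs_le]
    constructor
    · have : min (z 0) (1 - ε) ≤ x := le_max_right _ _
      have : z 0 - ε ≤ min (z 0) (1 - ε) := le_min (by linarith) (by linarith [hz0.2])
      linarith
    · have : x ≤ z 0 + ε := max_le (by linarith [hz0.1]) ((min_le_left _ _).trans (by linarith))
      linarith
  have h1 := S.g_H hxm
  have h2 := S.H_est (c := u z) (k := 4 * ε * B) hxm (fun t ht => by
    have hx0 : 0 < x := by linarith [hxm.1]
    have hx1 : x < 1 := by linarith [hxm.2]
    have ht0 : 0 < t := lt_of_lt_of_le (by nlinarith) ht.1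
    refine (S.ubar_lip ⟨ht0, by linarith [ht.2]⟩ hz).trans ?_
    have h3 : |t - x| ≤ ε := by
      rw [abs_le]; constructor
      · nlinarith [ht.1]
      · linarith [ht.2]
    have h4 := abs_sub_le t x (z 0)
    nlinarith) (S.hM z hz)
  have h3 := abs_sub_le (gf Ω u p ε x) (Hf Ω u ε x) (u z)
  linarith

end Setup

namespace Setup
variable {m : ℕ} {Ω : Set (EuclideanSpace ℝ (Fin (m+1)))} {ε : ℝ}
    {u : EuclideanSpace ℝ (Fin (m+1)) → ℝ} {B M : ℝ} {p q : EuclideanSpace ℝ (Fin (m+1))}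

lemma grad_le (S : Setup m Ω ε u B M p q) {z : EuclideanSpace ℝ (Fin (m+1))} (hz : z ∈ Ω) :
    ‖gradient u z‖ ≤ B := by
  calc _ ≤ _ := S.hg z hz
    _ ≤ B * 1 := mul_le_mul_of_nonneg_left (S.max_le_one (S.hsub z hz).1) S.hB0
    _ = B := mul_one B

lemma grad_sq_le (S : Setup m Ω ε u B M p q) {z : EuclideanSpace ℝ (Fin (m+1))} (hz : z ∈ Ω) :
    ‖gradient u z‖ ^ 2 ≤ B ^ 2 := pow_le_pow_left₀ (norm_nonneg _) (S.grad_le hz) 2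

lemma grad_int (S : Setup m Ω ε u B M p q) : IntegrableOn (fun z => ‖gradient u z‖ ^ 2) Ω :=
  intOn_of_bdd S.hopen.measurableSet S.hfin
    ((S.hc.norm.pow 2).aestronglyMeasurable S.hopen.measurableSet) (B ^ 2) fun z hz => by
      rw [abs_of_nonneg (by positivity)]; exact S.grad_sq_le hz

lemma K_est (S : Setup m Ω ε u B M p q) :
    IntegrableOn (fun z => ∫ σ in Ioc (1 - ε) 1,
      Ω.indicator (fun w => ‖gradient u w‖ ^ 2) (cT p σ z)) Ω ∧
    ∫ z in Ω, ∫ σ in Ioc (1 - ε) 1, Ω.indicator (fun w => ‖gradient u w‖ ^ 2) (cT p σ z) ≤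
      ε * (((1 - ε) ^ (m + 1))⁻¹ * ∫ z in Ω, ‖gradient u z‖ ^ 2) := by
  have hε := S.hε
  have hε4 := S.hε4
  have hτ : 0 < 1 - ε := by linarith
  set G := Ω.indicator (fun w => ‖gradient u w‖ ^ 2) with hG
  have hGm : Measurable G := meas_ind S.hopen (S.hc.norm.pow 2)
  have hG0 : ∀ w, 0 ≤ G w := fun w => indicator_nonneg (fun _ _ => by positivity) w
  have hGB : ∀ w, G w ≤ B ^ 2 := fun w => by
    by_cases hw : w ∈ Ω
    · rw [hG, indicator_of_mem hw]; exact S.grad_sq_le hw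
    · rw [hG, indicator_of_notMem hw]; positivity
  have hGi : Integrable G := (integrable_indicator_iff S.hopen.measurableSet).2 S.grad_int
  have hGI : ∫ z, G z = ∫ z in Ω, ‖gradient u z‖ ^ 2 := integral_indicator S.hopen.measurableSet
  set I := ∫ z in Ω, ‖gradient u z‖ ^ 2
  have hI0 : 0 ≤ I := by rw [← hGI]; exact integral_nonneg hG0
  have : IsFiniteMeasure (volume.restrict Ω) := ⟨by simpa using S.hfin.lt_top⟩
  have hK : Integrable (Function.uncurry fun z σ => G (cT p σ z))
      ((volume.restrict Ω).prod (volume.restrict (Ioc (1 - ε) 1))) := by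
    refine Integrable.of_bound (Measurable.aestronglyMeasurable ?_) (B ^ 2)
      (Eventually.of_forall fun x => ?_)
    · have : Continuous fun x : EuclideanSpace ℝ (Fin (m+1)) × ℝ => cT p x.2 x.1 := by
        unfold cT; fun_prop
      exact hGm.comp this.measurable
    · simp only [Function.uncurry]
      rw [Real.norm_eq_abs, abs_of_nonneg (hG0 _)]; exact hGB _
  refine ⟨hK.integral_prod_left, ?_⟩
  rw [integral_integral_swap hK]
  calc _ ≤ ∫ σ in Ioc (1 - ε) 1, ((1 - ε) ^ (m + 1))⁻¹ * I := by
        refine setIntegral_mono_on hK.integral_prod_right (integrableOn_const (by simp))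
          measurableSet_Ioc fun σ hσ => ?_
        have hσ0 : 0 < σ := hτ.trans hσ.1
        calc _ ≤ ∫ z, G (cT p σ z) := setIntegral_le_integral (integrable_comp_cT hGi p hσ0)
              (Eventually.of_forall fun z => hG0 _)
          _ = (σ ^ (m+1))⁻¹ * I := by rw [int_comp_cT G p hσ0, hGI]
          _ ≤ _ := by
            gcongr
            exact hσ.1.le
    _ = _ := by
        rw [setIntegral_const, smul_eq_mul]
        simp [Measure.real, hε.le]

lemma energy (S : Setup m Ω ε u B M p q) :
    ∫ x in (0:ℝ)..1, ωvol Ω x * (Dq Ω u p ε x) ^ 2 ≤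
      ((1 - ε) ^ (m + 1))⁻¹ * (∫ z in Ω, ‖gradient u z‖ ^ 2) +
        4 * ε ^ 2 * B ^ 2 * volume.real Ω := by
  have hε := S.hε
  have hε4 := S.hε4
  have hM0 := S.hM0
  have hτ : 0 < 1 - ε := by linarith
  set Ω' := Ω ∩ {z | z 0 ∈ Icc ε (1 - ε)} with hΩ'
  have hcl : MeasurableSet {z : EuclideanSpace ℝ (Fin (m+1)) | z 0 ∈ Icc ε (1 - ε)} :=
    measurableSet_Icc.preimage
      (by fun_prop : Continuous fun z : EuclideanSpace ℝ (Fin (m+1)) => z 0).measurable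
  have hm' : MeasurableSet Ω' := S.hopen.measurableSet.inter hcl
  have hfin' : volume Ω' ≠ ⊤ := ne_top_of_le_ne_top S.hfin (measure_mono inter_subset_left)
  have hcr : ∀ s ∈ Icc ε (1 - ε), cross Ω' s = cross Ω s := fun s hs => by
    ext y; simp only [cross, hΩ', mem_inter_iff, mem_ofPred_eq, mkPt_zero]; tauto
  have hiM : ∀ z, |Ω.indicator u z| ≤ M := fun z => by
    by_cases hz : z ∈ Ω
    · rw [indicator_of_mem hz]; exact S.hM z hz
    · rw [indicator_of_notMem hz, abs_zero]; exact hM0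
  have hdqb : ∀ z : EuclideanSpace ℝ (Fin (m+1)), ε ≤ z 0 → |dq Ω u p (1 - ε) z| ≤ 2 * M / (ε * ε) := by
    intro z hz
    have hz0 : 0 < z 0 := hε.trans_le hz
    rw [dq, sub_sub_cancel, abs_div, abs_of_pos (mul_pos hε hz0)]
    have h1 := norm_sub_le (Ω.indicator u z) (Ω.indicator u (cT p (1 - ε) z))
    simp only [Real.norm_eq_abs] at h1
    have h2 := hiM z
    have h3 := hiM (cT p (1 - ε) z)
    gcongr
    linarith
  have hdq2b : ∀ z : EuclideanSpace ℝ (Fin (m+1)), ε ≤ z 0 →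
      |dq Ω u p (1 - ε) z ^ 2| ≤ (2 * M / (ε * ε)) ^ 2 := fun z hz => by
    rw [abs_pow]; exact pow_le_pow_left₀ (abs_nonneg _) (hdqb z hz) 2
  have hdqi : IntegrableOn (fun z => dq Ω u p (1 - ε) z ^ 2) Ω' :=
    intOn_of_bdd hm' hfin' ((S.meas_dq _).pow_const 2).aestronglyMeasurable _
      fun z hz => hdq2b z hz.2.1
  have hpt : ∀ s, ωvol Ω s * (Dq Ω u p ε s) ^ 2 ≤
      ∫ y in cross Ω' s, dq Ω u p (1 - ε) (mkPt m s y) ^ 2 := by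
    intro s
    by_cases hs : s ∈ Icc ε (1 - ε)
    · have hs' : s ∈ Ioo (0:ℝ) 1 := ⟨by linarith [hs.1], by linarith [hs.2]⟩
      have hω := S.ω_pos hs'
      have hω1 := hω.1
      rw [hcr s hs, Dq, indicator_of_mem hs]
      have : IsFiniteMeasure (volume.restrict (cross Ω s)) := ⟨by simpa using hω.2.lt_top⟩
      have hme : Measurable fun y => dq Ω u p (1 - ε) (mkPt m s y) :=
        (S.meas_dq _).comp (continuous_mkPt_right m s).measurable
      have hj := jensen_sq (ν := volume.restrict (cross Ω s))
        (f := fun y => dq Ω u p (1 - ε) (mkPt m s y))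
        (intOn_of_bdd (isOpen_cross S.hopen s).measurableSet hω.2 hme.aestronglyMeasurable _
          fun y hy => hdqb _ (by rw [mkPt_zero]; exact hs.1))
        (intOn_of_bdd (isOpen_cross S.hopen s).measurableSet hω.2
          (hme.pow_const 2).aestronglyMeasurable _
          fun y hy => hdq2b _ (by rw [mkPt_zero]; exact hs.1))
      have e : (volume.restrict (cross Ω s)).real univ = ωvol Ω s := by
        simp [Measure.real, ωvol]
      rw [e] at hj
      rw [div_pow, ← mul_div_assoc, div_le_iff₀ (by positivity)]
      nlinarith
    · rw [Dq, indicator_of_notMem hs]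
      simp only [ne_eq, OfNat.ofNat_ne_zero, not_false_eq_true, zero_pow, mul_zero]
      exact integral_nonneg fun y => sq_nonneg _
  have hfi := fubini_int hm' hdqi
  have step1 : ∫ x in (0:ℝ)..1, ωvol Ω x * (Dq Ω u p ε x) ^ 2 ≤
      ∫ z in Ω', dq Ω u p (1 - ε) z ^ 2 := by
    rw [fubini hm' hdqi, intervalIntegral.integral_of_le zero_le_one]
    refine (integral_mono_of_nonneg (Eventually.of_forall fun x => ?_) hfi.integrableOn
      (Eventually.of_forall hpt)).trans (setIntegral_le_integral hfi (Eventually.of_forall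
        fun x => integral_nonneg fun y => sq_nonneg _))
    exact mul_nonneg ENNReal.toReal_nonneg (sq_nonneg _)
  obtain ⟨hKi, hK⟩ := S.K_est
  set G := Ω.indicator (fun w => ‖gradient u w‖ ^ 2) with hG
  have hG0 : ∀ w, 0 ≤ G w := fun w => indicator_nonneg (fun _ _ => by positivity) w
  have hci : IntegrableOn (fun _ : EuclideanSpace ℝ (Fin (m+1)) => 4 * ε ^ 2 * B ^ 2) Ω :=
    integrableOn_const S.hfin
  have hsi : IntegrableOn (fun z => (1 / ε) * (∫ σ in Ioc (1 - ε) 1, G (cT p σ z)) +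
      4 * ε ^ 2 * B ^ 2) Ω := (hKi.const_mul _).add hci
  have step2 : ∫ z in Ω', dq Ω u p (1 - ε) z ^ 2 ≤
      ∫ z in Ω', ((1 / ε) * (∫ σ in Ioc (1 - ε) 1, G (cT p σ z)) + 4 * ε ^ 2 * B ^ 2) := by
    refine setIntegral_mono_on hdqi (hsi.mono_set inter_subset_left) hm' fun z hz => ?_
    have h := S.ray hz.1 hz.2.1 hτ (by linarith)
    have e1 : ∫ σ in Ioc (1 - ε) 1, ‖gradient u (cT p σ z)‖ ^ 2 =
        ∫ σ in Ioc (1 - ε) 1, G (cT p σ z) := by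
      refine setIntegral_congr_fun measurableSet_Ioc fun σ hσ => ?_
      simp only [hG]
      rw [indicator_of_mem (S.cT_mem_of S.hp (hτ.trans hσ.1) hσ.2 hz.1)]
    rw [e1, sub_sub_cancel] at h
    rw [dq, indicator_of_mem hz.1, indicator_of_mem (S.cT_mem_of S.hp hτ (by linarith) hz.1),
      sub_sub_cancel]
    exact h
  have step3 : ∫ z in Ω', ((1 / ε) * (∫ σ in Ioc (1 - ε) 1, G (cT p σ z)) + 4 * ε ^ 2 * B ^ 2) ≤
      ∫ z in Ω, ((1 / ε) * (∫ σ in Ioc (1 - ε) 1, G (cT p σ z)) + 4 * ε ^ 2 * B ^ 2) := by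
    refine setIntegral_mono_set hsi (Eventually.of_forall fun z => ?_)
      (Eventually.of_forall fun z hz => hz.1)
    have : 0 ≤ ∫ σ in Ioc (1 - ε) 1, G (cT p σ z) := integral_nonneg fun σ => hG0 _
    simp only [Pi.zero_apply]
    positivity
  have step4 : ∫ z in Ω, ((1 / ε) * (∫ σ in Ioc (1 - ε) 1, G (cT p σ z)) + 4 * ε ^ 2 * B ^ 2) ≤
      ((1 - ε) ^ (m + 1))⁻¹ * (∫ z in Ω, ‖gradient u z‖ ^ 2) +
        4 * ε ^ 2 * B ^ 2 * volume.real Ω := by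
    rw [integral_add (hKi.const_mul _) hci, integral_const_mul, setIntegral_const, smul_eq_mul]
    have : 1 / ε * ∫ z in Ω, ∫ σ in Ioc (1 - ε) 1, G (cT p σ z) ≤ 1 / ε *
      (ε * (((1 - ε) ^ (m + 1))⁻¹ * ∫ z in Ω, ‖gradient u z‖ ^ 2)) := by gcongr
    rw [← mul_assoc (1 / ε) ε, one_div_mul_cancel hε.ne', one_mul] at this
    linarith
  exact step1.trans (step2.trans (step3.trans step4))

end Setup

namespace Setup
variable {m : ℕ} {Ω : Set (EuclideanSpace ℝ (Fin (m+1)))} {ε : ℝ}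
    {u : EuclideanSpace ℝ (Fin (m+1)) → ℝ} {B M : ℝ} {p q : EuclideanSpace ℝ (Fin (m+1))}

lemma u_int (S : Setup m Ω ε u B M p q) : IntegrableOn u Ω :=
  intOn_of_bdd S.hopen.measurableSet S.hfin
    (S.cont_u.aestronglyMeasurable S.hopen.measurableSet) M S.hM

lemma u2_int (S : Setup m Ω ε u B M p q) : IntegrableOn (fun z => u z ^ 2) Ω :=
  intOn_of_bdd S.hopen.measurableSet S.hfin
    ((S.cont_u.pow 2).aestronglyMeasurable S.hopen.measurableSet) (M ^ 2) fun z hz => by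
      rw [abs_pow]; exact pow_le_pow_left₀ (abs_nonneg _) (S.hM z hz) 2

lemma diam (S : Setup m Ω ε u B M p q) {z w : EuclideanSpace ℝ (Fin (m+1))} (hz : z ∈ Ω)
    (hw : w ∈ Ω) : ‖z - w‖ ≤ 2 := by
  have hε := S.hε
  have hε4 := S.hε4
  have h2 : ‖yPt z - yPt w‖ ≤ 2 * ε := by
    have := norm_sub_le (yPt z) (yPt w)
    have := (S.hsub z hz).2
    have := (S.hsub w hw).2
    linarith
  have h1 : ‖z - w‖ ^ 2 = (z 0 - w 0) ^ 2 + ‖yPt z - yPt w‖ ^ 2 := by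
    conv_lhs => rw [← mkPt_yPt z, ← mkPt_yPt w, mkPt_sub, norm_mkPt_sq]
  refine abs_le_of_sq_le_sq' ?_ (by positivity) |>.2
  rw [h1]
  have ha := (S.hsub z hz).1
  have hb := (S.hsub w hw).1
  have h3 : (z 0 - w 0) ^ 2 ≤ 1 := by
    rw [sq_le_one_iff_abs_le_one, abs_le]
    constructor <;> linarith [ha.1, ha.2, hb.1, hb.2]
  have h4 : ‖yPt z - yPt w‖ ^ 2 ≤ 1 := by
    rw [sq_le_one_iff_abs_le_one, abs_le]
    constructor <;> linarith [norm_nonneg (yPt z - yPt w)]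
  linarith

lemma L2_lower {C₀ : ℝ} (hC : 0 < C₀) (S : Setup m Ω ε u (C₀ * M) M p q)
    {z0 : EuclideanSpace ℝ (Fin (m+1))} (hz0 : z0 ∈ Ω) (hM : 3 * M / 4 ≤ |u z0|) :
    (1 / (8 * (C₀ + 1))) ^ (m + 1) / 4 * (M ^ 2 * volume.real Ω) ≤ ∫ z in Ω, u z ^ 2 := by
  set δ := 1 / (8 * (C₀ + 1)) with hδ
  have hδ0 : 0 < δ := by positivity
  have hδ1 : δ ≤ 1 := by rw [hδ, div_le_one (by positivity)]; linarith
  have hM0 := S.hM0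
  set A := cT z0 δ '' Ω with hA
  have hAm : MeasurableSet A := meas_img _ hδ0 S.hopen
  have hAs : A ⊆ Ω := by
    rintro _ ⟨z, hz, rfl⟩
    exact S.cT_mem_of (subset_closure hz0) hδ0 hδ1 hz
  have hAv : volume.real A = δ ^ (m+1) * volume.real Ω := vol_image_cT _ hδ0 _
  have hAf : volume A ≠ ⊤ := ne_top_of_le_ne_top S.hfin (measure_mono hAs)
  have hpt : ∀ w ∈ A, M ^ 2 / 4 ≤ u w ^ 2 := by
    rintro _ ⟨z, hz, rfl⟩
    have h1 := S.lip (hAs ⟨z, hz, rfl⟩) hz0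
    have e : cT z0 δ z - z0 = δ • (z - z0) := by simp only [cT]; module
    rw [e, norm_smul, Real.norm_eq_abs, abs_of_pos hδ0] at h1
    have h2 : C₀ * M * (δ * ‖z - z0‖) ≤ M / 4 := by
      calc _ ≤ C₀ * M * (δ * 2) := by gcongr; exact S.diam hz hz0
        _ = M / 4 * (C₀ / (C₀ + 1)) := by rw [hδ]; field_simp; ring
        _ ≤ M / 4 * 1 := by
          gcongr
          rw [div_le_one (by positivity)]; linarith
        _ = _ := mul_one _
    have h3 : M / 2 ≤ |u (cT z0 δ z)| := by
      have := abs_sub_abs_le_abs_sub (u z0) (u (cT z0 δ z))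
      rw [abs_sub_comm] at this
      linarith
    calc M ^ 2 / 4 = (M / 2) ^ 2 := by ring
      _ ≤ |u (cT z0 δ z)| ^ 2 := by gcongr
      _ = _ := sq_abs _
  calc _ = ∫ w in A, M ^ 2 / 4 := by rw [setIntegral_const, smul_eq_mul, hAv]; ring
    _ ≤ ∫ w in A, u w ^ 2 :=
        setIntegral_mono_on (integrableOn_const hAf) (S.u2_int.mono_set hAs) hAm hpt
    _ ≤ _ := setIntegral_mono_set S.u2_int (Eventually.of_forall fun z => sq_nonneg _)
        (Eventually.of_forall hAs)

lemma vol_pos (S : Setup m Ω ε u B M p q) : 0 < volume.real Ω := by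
  refine ENNReal.toReal_pos ?_ S.hfin
  obtain ⟨y, hy⟩ := S.hne (1/2) ⟨by norm_num, by norm_num⟩
  exact (S.hopen.measure_pos _ ⟨_, hy⟩).ne'

/-- existence of a good test function -/
lemma test (S : Setup m Ω ε u B M p q) (hu0 : ∫ z in Ω, u z = 0) {κ : ℝ}
    (hκ : κ = 16 * m * ε * B + 8 * ε * B + 2 * ε * M) :
    ∃ g : ℝ → ℝ, (∃ K, LipschitzOnWith K g (Icc 0 1)) ∧
      (∫ x in (0:ℝ)..1, ωvol Ω x * g x) = 0 ∧
      (∫ z in Ω, u z ^ 2) - 4 * κ * M * volume.real Ω ≤ ∫ x in (0:ℝ)..1, ωvol Ω x * (g x) ^ 2 ∧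
      ∫ x in (0:ℝ)..1, ωvol Ω x * (deriv g x) ^ 2 ≤
        ((1 - ε) ^ (m + 1))⁻¹ * (∫ z in Ω, ‖gradient u z‖ ^ 2) +
        4 * ε ^ 2 * B ^ 2 * volume.real Ω := by
  have hΩm := S.hopen.measurableSet
  have h01 : ∀ z ∈ Ω, z 0 ∈ Ioo (0:ℝ) 1 := fun z hz => (S.hsub z hz).1
  have hV := S.vol_pos
  set V := volume.real Ω with hVdef
  have hM0 := S.hM0
  obtain ⟨K, hK⟩ := S.g_lip
  have hcl : ∀ z ∈ Ω, |gf Ω u p ε (z 0) - u z| ≤ κ := fun z hz => hκ ▸ S.g_close hz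
  have hcont0 : Continuous fun z : EuclideanSpace ℝ (Fin (m+1)) => z 0 := by fun_prop
  have hgc : Continuous fun z : EuclideanSpace ℝ (Fin (m+1)) => gf Ω u p ε (z 0) :=
    hK.continuous.comp hcont0
  have hgb : ∀ z ∈ Ω, |gf Ω u p ε (z 0)| ≤ κ + M := fun z hz => by
    have h1 := hcl z hz
    have h2 := S.hM z hz
    have h3 := abs_sub_abs_le_abs_sub (gf Ω u p ε (z 0)) (u z)
    linarith
  have hgi : IntegrableOn (fun z : EuclideanSpace ℝ (Fin (m+1)) => gf Ω u p ε (z 0)) Ω :=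
    intOn_of_bdd hΩm S.hfin hgc.aestronglyMeasurable _ hgb
  set a := (∫ z in Ω, gf Ω u p ε (z 0)) / V with ha
  have haκ : |a| ≤ κ := by
    rw [ha, abs_div, abs_of_pos hV, div_le_iff₀ hV]
    have := norm_setIntegral_le_of_norm_le_const (μ := volume)
      (f := fun z : EuclideanSpace ℝ (Fin (m+1)) => gf Ω u p ε (z 0) - u z)
      S.hfin.lt_top hcl
    rwa [integral_sub hgi S.u_int, hu0, sub_zero] at this
  have hai : IntegrableOn (fun _ : EuclideanSpace ℝ (Fin (m+1)) => a) Ω :=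
    integrableOn_const S.hfin
  refine ⟨fun x => gf Ω u p ε x - a, ⟨K, ?_⟩, ?_, ?_, ?_⟩
  · have : LipschitzWith K fun x => gf Ω u p ε x - a := LipschitzWith.of_dist_le_mul fun x y => by
      rw [dist_sub_right]; exact hK.dist_le_mul x y
    exact this.lipschitzOnWith
  · rw [← fubini_x hΩm h01 (φ := fun x => gf Ω u p ε x - a) (hgi.sub hai),
      integral_sub hgi hai, setIntegral_const, smul_eq_mul, ha]
    field_simp; ring
  · have hi2 : IntegrableOn (fun z : EuclideanSpace ℝ (Fin (m+1)) =>
        (gf Ω u p ε (z 0) - a) ^ 2) Ω := by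
      refine intOn_of_bdd hΩm S.hfin ((hgc.sub continuous_const).pow 2).aestronglyMeasurable
        ((κ + M + κ) ^ 2) fun z hz => ?_
      rw [abs_pow]
      refine pow_le_pow_left₀ (abs_nonneg _) ?_ 2
      have := hgb z hz
      have h3 := norm_sub_le (gf Ω u p ε (z 0)) a
      simp only [Real.norm_eq_abs] at h3
      linarith
    rw [← fubini_x hΩm h01 (φ := fun x => (gf Ω u p ε x - a) ^ 2) hi2]
    have hci : IntegrableOn (fun _ : EuclideanSpace ℝ (Fin (m+1)) => 4 * κ * M) Ω :=
      integrableOn_const S.hfin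
    have : (∫ z in Ω, u z ^ 2) - 4 * κ * M * V = ∫ z in Ω, (u z ^ 2 - 4 * κ * M) := by
      rw [integral_sub S.u2_int hci, setIntegral_const, smul_eq_mul]; ring
    rw [this]
    refine setIntegral_mono_on (S.u2_int.sub hci) hi2 hΩm fun z hz => ?_
    have h1 := hcl z hz
    have h2 := S.hM z hz
    set G := gf Ω u p ε (z 0)
    have h3 : |G - a - u z| ≤ 2 * κ := by
      have : G - a - u z = (G - u z) - a := by ring
      rw [this]
      have h3 := norm_sub_le (G - u z) a
      simp only [Real.norm_eq_abs] at h3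
      linarith
    have h4 : |u z * (G - a - u z)| ≤ M * (2 * κ) := by
      rw [abs_mul]; gcongr
    have h5 := (abs_le.1 h4).1
    nlinarith [sq_nonneg (G - a - u z)]
  · have e : ∫ x in (0:ℝ)..1, ωvol Ω x * (deriv (fun x => gf Ω u p ε x - a) x) ^ 2 =
        ∫ x in (0:ℝ)..1, ωvol Ω x * (Dq Ω u p ε x) ^ 2 := by
      refine intervalIntegral.integral_congr_ae ?_
      filter_upwards [S.g_deriv] with x hx _
      rw [deriv_sub_const, hx]
    rw [e]
    exact S.energy

end Setup

lemma inv_pow_bound {ε : ℝ} (hε : 0 < ε) (h4 : ε ≤ 1/4) (n : ℕ) :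
    ((1 - ε) ^ n)⁻¹ ≤ 1 + n * 2 ^ n * ε := by
  have h1 := one_add_mul_le_pow (a := -ε) (by linarith) n
  have h2 : ((1 - ε) ^ n)⁻¹ ≤ 2 ^ n := by
    rw [← inv_pow]
    refine pow_le_pow_left₀ (by rw [inv_nonneg]; linarith) ?_ n
    rw [inv_le_comm₀ (by linarith) (by norm_num)]; linarith
  have hp : 0 < (1 - ε) ^ n := pow_pos (by linarith) n
  have h3 : ((1 - ε) ^ n)⁻¹ * (1 - ε) ^ n = 1 := inv_mul_cancel₀ hp.ne'
  have h4 : 1 - (1 - ε) ^ n ≤ n * ε := by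
    have : (1 + -ε) = 1 - ε := by ring
    rw [this] at h1
    linarith
  have h5 : 0 < ((1 - ε) ^ n)⁻¹ := inv_pos.2 hp
  calc ((1 - ε) ^ n)⁻¹ = 1 + ((1 - ε) ^ n)⁻¹ * (1 - (1 - ε) ^ n) := by rw [mul_sub, h3]; ring
    _ ≤ 1 + 2 ^ n * (n * ε) := by
      have : 0 ≤ (n:ℝ) * ε := by positivity
      have := mul_le_mul_of_nonneg_left h4 h5.le
      have := mul_le_mul_of_nonneg_right h2 (show 0 ≤ (n:ℝ) * ε by positivity)
      linarith
    _ = _ := by ring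

/-- final arithmetic -/
lemma final_arith {ε lam U W C₀ C1 Kn c2 T N Q : ℝ} (hε : 0 < ε) (hε4 : ε ≤ 1/4)
    (hlam : 0 ≤ lam) (hW : 0 < W) (hc2 : 0 < c2) (hC1 : 0 < C1) (hK : 0 ≤ Kn)
    (hU : c2 * W ≤ U) (hE : lam * U ≤ C₀ ^ 2 * W) (hT : T ≤ 1 + Kn * ε)
    (hN : N ≤ T * (lam * U) + 4 * ε ^ 2 * C₀ ^ 2 * W) (hQ : U - 4 * C1 * ε * W ≤ Q)
    (hsm : 4 * C1 * ε ≤ c2 / 2) :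
    0 < Q ∧ N ≤ (lam + 2 * (Kn * C₀ ^ 2 + 4 * C₀ ^ 2 + 4 * C1 * (C₀ ^ 2 / c2)) / c2 * ε) * Q := by
  have hQ2 : c2 / 2 * W ≤ Q := by nlinarith
  have hU0 : 0 ≤ U := le_trans (by positivity) hU
  have hl : lam ≤ C₀ ^ 2 / c2 := by
    rw [le_div_iff₀ hc2]
    have : lam * (c2 * W) ≤ lam * U := by gcongr
    have : (lam * c2) * W ≤ C₀ ^ 2 * W := by linarith
    exact le_of_mul_le_mul_right this hW
  refine ⟨lt_of_lt_of_le (by positivity) hQ2, ?_⟩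
  set C2 := Kn * C₀ ^ 2 + 4 * C₀ ^ 2 + 4 * C1 * (C₀ ^ 2 / c2) with hC2
  have hC20 : 0 ≤ C2 := by positivity
  have h1 : T * (lam * U) ≤ lam * U + Kn * ε * (C₀ ^ 2 * W) := by
    calc _ ≤ (1 + Kn * ε) * (lam * U) := by gcongr
      _ = lam * U + Kn * ε * (lam * U) := by ring
      _ ≤ _ := by gcongr
  have h2 : 4 * ε ^ 2 * C₀ ^ 2 * W ≤ 4 * ε * C₀ ^ 2 * W := by
    gcongr; nlinarith
  have h3 : lam * U ≤ lam * Q + 4 * C1 * ε * W * (C₀ ^ 2 / c2) := by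
    have a1 : lam * U ≤ lam * (Q + 4 * C1 * ε * W) := by gcongr; linarith
    have a2 : lam * (4 * C1 * ε * W) ≤ (C₀ ^ 2 / c2) * (4 * C1 * ε * W) := by gcongr
    linarith
  have h4 : N ≤ lam * Q + ε * W * C2 := by rw [hC2]; linarith
  have h5 : ε * W * C2 ≤ 2 * C2 / c2 * ε * Q := by
    calc _ = 2 * C2 / c2 * ε * (c2 / 2 * W) := by field_simp
      _ ≤ _ := by gcongr
  linarith

lemma exists_end {m : ℕ} {Ω : Set (EuclideanSpace ℝ (Fin (m+1)))}
    (hb : Bornology.IsBounded Ω) (hne : ∀ s ∈ Ioo (0:ℝ) 1, (cross Ω s).Nonempty) {t : ℝ}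
    (ht : t ∈ Icc (0:ℝ) 1) : ∃ p ∈ closure Ω, p 0 = t := by
  have hc : Continuous fun z : EuclideanSpace ℝ (Fin (m+1)) => z 0 := by fun_prop
  have hcl : IsClosed ((fun z : EuclideanSpace ℝ (Fin (m+1)) => z 0) '' closure Ω) :=
    (hb.isCompact_closure.image hc).isClosed
  have hs : Ioo (0:ℝ) 1 ⊆ (fun z : EuclideanSpace ℝ (Fin (m+1)) => z 0) '' closure Ω := by
    intro s hs
    obtain ⟨y, hy⟩ := hne s hs
    exact ⟨mkPt m s y, subset_closure hy, mkPt_zero ..⟩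
  have := closure_minimal hs hcl
  rw [closure_Ioo zero_ne_one] at this
  exact this ht

lemma Q_pos {ω g : ℝ → ℝ} {K : NNReal} {W : ℝ} (hωm : Measurable ω)
    (hωW : ∀ x, ω x ≤ W) (hω0 : ∀ x, 0 ≤ ω x) (hω : ∀ x ∈ Ioo (0:ℝ) 1, 0 < ω x)
    (hg : LipschitzOnWith K g (Icc 0 1)) (hx : ∃ x ∈ Icc (0:ℝ) 1, g x ≠ 0) :
    0 < ∫ x in (0:ℝ)..1, ω x * g x ^ 2 := by
  have hgc := hg.continuousOn
  obtain ⟨R, hR⟩ := isCompact_Icc.exists_bound_of_continuousOn hgc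
  have hint : IntegrableOn (fun x => ω x * g x ^ 2) (Icc 0 1) := by
    refine intOn_of_bdd measurableSet_Icc (by simp)
      (hωm.aestronglyMeasurable.mul ((hgc.pow 2).aestronglyMeasurable measurableSet_Icc))
      (W * R ^ 2) fun x hx => ?_
    rw [abs_mul, abs_pow, abs_of_nonneg (hω0 x)]
    have := hωW x
    have h2 : |g x| ≤ R := hR x hx
    have := hω0 x
    gcongr
    linarith
  rw [intervalIntegral.integral_of_le zero_le_one, ← integral_Icc_eq_integral_Ioc]
  have hn : ∀ x, 0 ≤ ω x * g x ^ 2 := fun x => mul_nonneg (hω0 x) (sq_nonneg _)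
  refine lt_of_le_of_ne (integral_nonneg hn) fun h0 => ?_
  have h1 := (integral_eq_zero_iff_of_nonneg hn hint).1 h0.symm
  have h2 : g =ᵐ[volume.restrict (Icc 0 1)] fun _ => (0:ℝ) := by
    have hm : ∀ᵐ x ∂(volume.restrict (Icc (0:ℝ) 1)), x ∈ Ioo (0:ℝ) 1 := by
      rw [← Measure.restrict_congr_set (Ioo_ae_eq_Icc (μ := volume))]
      exact ae_restrict_mem measurableSet_Ioo
    filter_upwards [h1, hm] with x hx hx'
    have := hω x hx'
    simpa [this.ne'] using hx
  have h3 := Measure.eqOn_Icc_of_ae_eq volume zero_ne_one h2 hgc continuousOn_const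
  obtain ⟨x, hx, hx'⟩ := hx
  exact hx' (h3 hx)

/-- For a long thin convex domain, the first nonzero Neumann eigenvalue `λ`
of the Laplacian and the first eigenvalue `μ` of the limiting ODE, characterized variationally,
satisfy `λ ≤ μ ≤ λ + Cε`, with `C` depending only on the dimension (and the constants `c₀, C₀`
of the facts from [CJK2009], which depend only on the dimension). -/
theorem first_neumann_eigenvalue_comparison
    (m : ℕ) (hm : 1 ≤ m) (c₀ C₀ : ℝ) (hc₀ : 0 < c₀) (hC₀ : 0 < C₀) :
    ∃ C > (0:ℝ), ∃ ε₀ > (0:ℝ),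
    ∀ (ε : ℝ) (Ω : Set (EuclideanSpace ℝ (Fin (m+1))))
      (u : EuclideanSpace ℝ (Fin (m+1)) → ℝ) (lam μ L0 L1 : ℝ),
      0 < ε → ε < ε₀ →
      IsOpen Ω → Convex ℝ Ω → Bornology.IsBounded Ω →
      -- smooth boundary
      (∃ F : EuclideanSpace ℝ (Fin (m+1)) → ℝ, ContDiff ℝ (⊤:ℕ∞) F ∧
        Ω = {p | F p < 0} ∧ frontier Ω = {p | F p = 0} ∧
        ∀ p ∈ frontier Ω, gradient F p ≠ 0) →
      -- Ω ⊆ (0,1) × B^{n-1}(ε)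
      (∀ x y, mkPt m x y ∈ Ω →
        x ∈ Ioo (0:ℝ) 1 ∧ y ∈ Metric.ball (0 : EuclideanSpace ℝ (Fin m)) ε) →
      -- nonempty cross-sections
      (∀ s ∈ Ioo (0:ℝ) 1, (cross Ω s).Nonempty) →
      -- u is a nonzero mean-zero smooth Neumann eigenfunction with eigenvalue lam
      ContDiffOn ℝ (⊤:ℕ∞) u (closure Ω) →
      (∃ p ∈ Ω, u p ≠ 0) →
      (∫ p in Ω, u p) = 0 →
      (∀ p ∈ Ω, lap u p = -(lam * u p)) →
      (∀ p ∈ frontier Ω, ∀ v, (∀ z ∈ Ω, ⟪v, z - p⟫ ≤ 0) → ⟪gradient u p, v⟫ = 0) →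
      0 < lam →
      -- lam is the smallest nonzero Neumann eigenvalue (variational characterization),
      -- attained at u
      lam = sInf {r | ∃ w : EuclideanSpace ℝ (Fin (m+1)) → ℝ,
        ContDiffOn ℝ (⊤:ℕ∞) w (closure Ω) ∧ (∃ p ∈ Ω, w p ≠ 0) ∧ (∫ p in Ω, w p) = 0 ∧
        r = (∫ p in Ω, ‖gradient w p‖ ^ 2) / (∫ p in Ω, (w p) ^ 2)} →
      lam = (∫ p in Ω, ‖gradient u p‖ ^ 2) / (∫ p in Ω, (u p) ^ 2) →
      -- facts from [CJK2009], assumed as hypotheses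
      (∀ p ∈ Ω, ‖gradient u p‖ ≤
        C₀ * max (min (p 0) (1 - p 0)) ε * sSup ((fun q => |u q|) '' Ω)) →
      c₀ * sSup (u '' Ω) ≤ -sInf (u '' Ω) →
      -sInf (u '' Ω) ≤ C₀ * sSup (u '' Ω) →
      Tendsto (ubarFn Ω u) (𝓝[>] 0) (𝓝 L0) →
      (1 - C₀ * ε) * sSup (u '' Ω) ≤ L0 →
      Tendsto (ubarFn Ω u) (𝓝[<] 1) (𝓝 L1) →
      L1 ≤ (1 - C₀ * ε) * sInf (u '' Ω) →
      -- μ: variational characterization of the smallest positive Neumann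
      -- eigenvalue of the ODE -(ωφ')' = μωφ
      μ = sInf {r | ∃ g : ℝ → ℝ, (∃ K, LipschitzOnWith K g (Icc 0 1)) ∧
        (∃ x ∈ Icc (0:ℝ) 1, g x ≠ 0) ∧ (∫ x in (0:ℝ)..1, ωvol Ω x * g x) = 0 ∧
        r = (∫ x in (0:ℝ)..1, ωvol Ω x * (deriv g x) ^ 2) /
            (∫ x in (0:ℝ)..1, ωvol Ω x * (g x) ^ 2)} →
      lam ≤ μ ∧ μ ≤ lam + C * ε := by
  set c2 : ℝ := (1 / (8 * (C₀ + 1))) ^ (m + 1) / 4 with hc2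
  set C1 : ℝ := 16 * m * C₀ + 8 * C₀ + 2 with hC1
  set Kn : ℝ := ((m + 1 : ℕ) : ℝ) * 2 ^ (m + 1) with hKn
  have hc20 : 0 < c2 := by positivity
  have hC10 : 0 < C1 := by positivity
  have hKn0 : 0 ≤ Kn := by positivity
  refine ⟨2 * (Kn * C₀ ^ 2 + 4 * C₀ ^ 2 + 4 * C1 * (C₀ ^ 2 / c2)) / c2, by positivity,
    min (1/4) (c2 / (8 * C1)), by positivity, ?_⟩
  intro ε Ω u lam μ L0 L1 hε hε0 hopen hconv hbdd _ hsub hne hu hune hu0 _ _ hlam hinf hatt hgr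
    _ _ _ _ _ _ hμ
  have hε4 : ε ≤ 1/4 := (hε0.trans_le (min_le_left _ _)).le
  have hsm : 4 * C1 * ε ≤ c2 / 2 := by
    have : ε < c2 / (8 * C1) := hε0.trans_le (min_le_right _ _)
    rw [lt_div_iff₀ (by positivity)] at this
    linarith
  set M := sSup ((fun q => |u q|) '' Ω) with hMdef
  have hBdd : BddAbove ((fun q => |u q|) '' Ω) :=
    ((hbdd.isCompact_closure.image_of_continuousOn hu.continuousOn.abs).bddAbove).mono
      (image_mono subset_closure)
  have hMle : ∀ z ∈ Ω, |u z| ≤ M := fun z hz => le_csSup hBdd ⟨z, hz, rfl⟩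
  obtain ⟨z1, hz1, hz1'⟩ := hune
  have hM0 : 0 < M := (abs_pos.2 hz1').trans_le (hMle z1 hz1)
  obtain ⟨_, ⟨z0, hz0, rfl⟩, hz0'⟩ := exists_lt_of_lt_csSup
    (show ((fun q => |u q|) '' Ω).Nonempty from ⟨_, ⟨z1, hz1, rfl⟩⟩)
    (show 3 * M / 4 < sSup ((fun q => |u q|) '' Ω) by rw [← hMdef]; linarith)
  obtain ⟨p, hp, hp0⟩ := exists_end hbdd hne (t := 0) ⟨le_rfl, zero_le_one⟩
  obtain ⟨q, hq, hq0⟩ := exists_end hbdd hne (t := 1) ⟨zero_le_one, le_rfl⟩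
  have hsub' : ∀ z ∈ Ω, z 0 ∈ Ioo (0:ℝ) 1 ∧ ‖yPt z‖ < ε := fun z hz => by
    have := hsub (z 0) (yPt z) (by rwa [mkPt_yPt])
    exact ⟨this.1, by simpa using this.2⟩
  have hpy : ‖yPt p‖ ≤ ε := by
    have hcl : IsClosed {z : EuclideanSpace ℝ (Fin (m+1)) | ‖yPt z‖ ≤ ε} :=
      isClosed_le (continuous_yPt m).norm continuous_const
    exact closure_minimal (fun z hz => (hsub' z hz).2.le) hcl hp
  have S : Setup m Ω ε u (C₀ * M) M p q :=
    { hε := hε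
      hε4 := hε4
      hopen := hopen
      hconv := hconv
      hfin := hbdd.measure_lt_top.ne
      hsub := hsub'
      hne := hne
      hp := hp
      hp0 := hp0
      hpy := hpy
      hq := hq
      hq0 := hq0
      hM0 := hM0.le
      hB0 := by positivity
      hM := hMle
      hd := fun z hz => (hu.contDiffAt (mem_of_superset (hopen.mem_nhds hz)
        subset_closure)).differentiableAt (by simp)
      hc := by
        have h1 := (hu.mono subset_closure).continuousOn_fderiv_of_isOpen hopen (by simp)
        exact (InnerProductSpace.toDual ℝ _).symm.continuous.comp_continuousOn h1
      hg := fun z hz => by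
        have := hgr z hz
        linarith }
  set U := ∫ z in Ω, u z ^ 2 with hU
  set V := volume.real Ω with hV
  have hV0 : 0 < V := S.vol_pos
  have hUl : c2 * (M ^ 2 * V) ≤ U := S.L2_lower hC₀ hz0 hz0'.le
  have hW : 0 < M ^ 2 * V := by positivity
  have hU0 : 0 < U := lt_of_lt_of_le (by positivity) hUl
  have hEU : lam * U = ∫ z in Ω, ‖gradient u z‖ ^ 2 := by
    rw [hatt]; exact div_mul_cancel₀ _ hU0.ne'
  have hE : lam * U ≤ C₀ ^ 2 * (M ^ 2 * V) := by
    rw [hEU]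
    calc _ ≤ ∫ z in Ω, (C₀ * M) ^ 2 :=
          setIntegral_mono_on S.grad_int (integrableOn_const S.hfin) hopen.measurableSet
            fun z hz => S.grad_sq_le hz
      _ = _ := by rw [setIntegral_const, smul_eq_mul]; ring
  obtain ⟨g, ⟨K, hgl⟩, hg0, hgQ, hgN⟩ := S.test hu0 rfl
  rw [← hEU] at hgN
  obtain ⟨hQ0, hNQ⟩ := final_arith (T := ((1 - ε) ^ (m + 1))⁻¹)
    (N := ∫ x in (0:ℝ)..1, ωvol Ω x * (deriv g x) ^ 2)
    (Q := ∫ x in (0:ℝ)..1, ωvol Ω x * (g x) ^ 2) (C1 := C1) (Kn := Kn)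
    hε hε4 hlam.le hW hc20 hC10 hKn0 hUl hE (inv_pow_bound hε hε4 _)
    (by refine hgN.trans (le_of_eq ?_); ring)
    (by refine le_trans (le_of_eq ?_) hgQ; rw [hC1]; ring) hsm
  have hω0 : ∀ x, 0 ≤ ωvol Ω x := fun x => ENNReal.toReal_nonneg
  have hgne : ∃ x ∈ Icc (0:ℝ) 1, g x ≠ 0 := by
    by_contra hcon
    push Not at hcon
    have : ∫ x in (0:ℝ)..1, ωvol Ω x * (g x) ^ 2 = 0 := by
      rw [intervalIntegral.integral_congr (g := fun _ => (0:ℝ))]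
      · simp
      · intro x hx
        rw [uIcc_of_le zero_le_one] at hx
        simp [hcon x hx]
    linarith
  have hmem : (∫ x in (0:ℝ)..1, ωvol Ω x * (deriv g x) ^ 2) /
      (∫ x in (0:ℝ)..1, ωvol Ω x * (g x) ^ 2) ∈ {r | ∃ g : ℝ → ℝ,
        (∃ K, LipschitzOnWith K g (Icc 0 1)) ∧
        (∃ x ∈ Icc (0:ℝ) 1, g x ≠ 0) ∧ (∫ x in (0:ℝ)..1, ωvol Ω x * g x) = 0 ∧
        r = (∫ x in (0:ℝ)..1, ωvol Ω x * (deriv g x) ^ 2) /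
            (∫ x in (0:ℝ)..1, ωvol Ω x * (g x) ^ 2)} := ⟨g, ⟨K, hgl⟩, hgne, hg0, rfl⟩
  have hR : ∀ w : EuclideanSpace ℝ (Fin (m+1)) → ℝ, ContDiff ℝ (⊤:ℕ∞) w → ∫ p in Ω, w p = 0 →
      lam * ∫ p in Ω, (w p) ^ 2 ≤ ∫ p in Ω, ‖gradient w p‖ ^ 2 := by
    intro w hw hw0
    have hnn : 0 ≤ ∫ p in Ω, (w p) ^ 2 := integral_nonneg fun _ => sq_nonneg _
    have hnn' : 0 ≤ ∫ p in Ω, ‖gradient w p‖ ^ 2 := integral_nonneg fun _ => sq_nonneg _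
    rcases eq_or_lt_of_le hnn with h | h
    · rw [← h, mul_zero]; exact hnn'
    · rw [← le_div_iff₀ h, hinf]
      refine csInf_le ⟨0, ?_⟩ ⟨w, hw.contDiffOn, ?_, hw0, rfl⟩
      · rintro r ⟨w', _, _, _, rfl⟩
        exact div_nonneg (integral_nonneg fun _ => sq_nonneg _)
          (integral_nonneg fun _ => sq_nonneg _)
      · by_contra hcon
        push Not at hcon
        have : ∫ p in Ω, (w p) ^ 2 = 0 := by
          rw [setIntegral_congr_fun (g := fun _ => (0:ℝ)) hopen.measurableSet
            fun z hz => by simp [hcon z hz]]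
          simp
        linarith
  constructor
  · rw [hμ]
    refine le_csInf ⟨_, hmem⟩ ?_
    rintro r ⟨g', ⟨K', hg'⟩, hne', h0', rfl⟩
    have hQ' := Q_pos (meas_ωvol hopen.measurableSet) S.ω_le hω0 (fun x hx => (S.ω_pos hx).1)
      hg' hne'
    rw [le_div_iff₀ hQ']
    exact lower_bound hopen.measurableSet S.hfin (fun z hz => (hsub' z hz).1) hlam.le S.ω_le hR
      hg' h0'
  · rw [hμ]
    refine (csInf_le ⟨0, ?_⟩ hmem).trans ?_
    · rintro r ⟨g', _, _, _, rfl⟩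
      refine div_nonneg ?_ ?_ <;>
      exact intervalIntegral.integral_nonneg zero_le_one fun x _ =>
        mul_nonneg (hω0 x) (sq_nonneg _)
    · rw [div_le_iff₀ hQ0]
      exact hNQ
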